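/- For any prime p there exist a field K and a central division K-algebra D of degree p whose genus gen(D) is infinite, i.e., there are infinitely many pairwise nonisomorphic central division K-algebras of degree p having the same maximal subfields as D. -/

import Mathlib

open scoped TensorProduct
universe u

/-- A finite-dimensional `F`-algebra is *split* if it is a matrix algebra over `F`. -/
def IsSplit (F : Type u) [Field F] (A : Type u) [Ring A] [Algebra F A] : Prop :=
  ∃ n : ℕ, 0 < n ∧ Nonempty (A ≃ₐ[F] Matrix (Fin n) (Fin n) F)

/-- Brauer equivalence of two `F`-algebras. -/
def BrauerEquiv (F : Type u) [Field F] (A B : Type u) [Ring A] [Algebra F A]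
    [Ring B] [Algebra F B] : Prop :=
  ∃ n m : ℕ, 0 < n ∧ 0 < m ∧ Nonempty (Matrix (Fin n) (Fin n) A ≃ₐ[F] Matrix (Fin m) (Fin m) B)

/-- `A` is a finite-dimensional central simple `F`-algebra. -/
def IsCSA (F A : Type u) [Field F] [Ring A] [Algebra F A] : Prop :=
  Algebra.IsCentral F A ∧ IsSimpleRing A ∧ FiniteDimensional F A

/-- The `n`-fold tensor power of an `F`-algebra. -/
abbrev tpow (F : Type u) [Field F] (A : Type u) [Ring A] [Algebra F A] (n : ℕ) : Type u :=
  ⨂[F] _ : Fin n, A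

/-- The Brauer class of `A` is killed by `p`: its `p`-th tensor power is split. -/
def IsPTorsion (F : Type u) [Field F] (A : Type u) [Ring A] [Algebra F A] (p : ℕ) : Prop :=
  IsSplit F (tpow F A p)

/-- The restriction map `Br(F)[p] → Br(E)[p]` along `f : F →+* E` is injective:
two `p`-torsion Brauer classes that agree after scalar extension agree already over `F`. -/
def ResInjP (p : ℕ) (F E : Type u) [Field F] [Field E] (f : F →+* E) : Prop :=
  letI : Algebra F E := f.toAlgebra
  ∀ (A B : Type u) [Ring A] [Algebra F A] [Ring B] [Algebra F B],
    IsCSA F A → IsCSA F B → IsPTorsion F A p → IsPTorsion F B p →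
    BrauerEquiv E (E ⊗[F] A) (E ⊗[F] B) → BrauerEquiv F A B

/-- The restriction map `Br(F) → Br(E)` along `f : F →+* E` is injective. -/
def ResInj (F E : Type u) [Field F] [Field E] (f : F →+* E) : Prop :=
  letI : Algebra F E := f.toAlgebra
  ∀ (A B : Type u) [Ring A] [Algebra F A] [Ring B] [Algebra F B],
    IsCSA F A → IsCSA F B →
    BrauerEquiv E (E ⊗[F] A) (E ⊗[F] B) → BrauerEquiv F A B

/-- `D` is a central division algebra of degree `p` over `K`. -/
def IsCentralDivisionOfDeg (K D : Type u) [Field K] [DivisionRing D] [Algebra K D]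
    (p : ℕ) : Prop :=
  Algebra.IsCentral K D ∧ FiniteDimensional K D ∧ Module.finrank K D = p ^ 2

/-- Witness for STATEMENT 11: a field `K`, a central division `K`-algebra `D` of degree `p`,
and infinitely many pairwise nonisomorphic central division `K`-algebras of degree `p` all
having the same maximal subfields as `D` — i.e. the genus of `D` is infinite. -/
structure InfiniteGenusWitness (p : ℕ) : Type (u + 1) where
  K : Type u
  [fieldK : Field K]
  D : Type u
  [divD : DivisionRing D]
  [algD : Algebra K D]
  hD : IsCentralDivisionOfDeg K D p
  /-- an infinite family of members of the genus of `D` -/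
  D' : ℕ → Type u
  [divD' : ∀ n, DivisionRing (D' n)]
  [algD' : ∀ n, Algebra K (D' n)]
  hD' : ∀ n, IsCentralDivisionOfDeg K (D' n) p
  noniso : ∀ n m, n ≠ m → IsEmpty (D' n ≃ₐ[K] D' m)
  sameMaxSubfields : ∀ n, ∀ (L : Type u) [Field L] [Algebra K L], Module.finrank K L = p →
    (Nonempty (L →ₐ[K] D) ↔ Nonempty (L →ₐ[K] D' n))

namespace GenusAux

open Polynomial

/-- The norm polynomial `∏ P(ζ^k X)`. -/
noncomputable def nrm {F : Type*} [CommRing F] (p : ℕ) (ζ : F) (P : F[X]) : F[X] :=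
  ∏ k ∈ Finset.range p, P.comp (C (ζ ^ k) * X)

/-- `e` is a norm from `F[X]/(X^p - a)`. -/
def IsN {F : Type*} [CommRing F] (p : ℕ) (ζ a e : F) : Prop :=
  ∃ P : F[X], (X ^ p - C a) ∣ nrm p ζ P - C e

section basic
variable {F : Type*} [CommRing F] {p : ℕ} {ζ a : F}

lemma nrm_mul (P Q : F[X]) : nrm p ζ (P * Q) = nrm p ζ P * nrm p ζ Q := by
  simp [nrm, Finset.prod_mul_distrib]

lemma nrm_C (x : F) : nrm p ζ (C x) = C (x ^ p) := by
  simp [nrm]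

lemma nrm_map {G : Type*} [CommRing G] (f : F →+* G) (P : F[X]) :
    (nrm p ζ P).map f = nrm p (f ζ) (P.map f) := by
  simp [nrm, Polynomial.map_prod, Polynomial.map_comp]

lemma aeval_nrm {R : Type*} [CommRing R] [Algebra F R] (A : R) (P : F[X]) :
    aeval A (nrm p ζ P) = ∏ k ∈ Finset.range p, aeval (algebraMap F R ζ ^ k * A) P := by
  simp [nrm, aeval_comp, map_prod]

lemma IsN.map {G : Type*} [CommRing G] (f : F →+* G) {e : F} (h : IsN p ζ a e) :
    IsN p (f ζ) (f a) (f e) := by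
  obtain ⟨P, hP⟩ := h
  refine ⟨P.map f, ?_⟩
  have := Polynomial.map_dvd f hP
  simpa [nrm_map] using this

lemma IsN.mul {e e' : F} (h : IsN p ζ a e) (h' : IsN p ζ a e') : IsN p ζ a (e * e') := by
  obtain ⟨P, hP⟩ := h
  obtain ⟨Q, hQ⟩ := h'
  refine ⟨P * Q, ?_⟩
  have : nrm p ζ (P * Q) - C (e * e') =
      (nrm p ζ P - C e) * nrm p ζ Q + C e * (nrm p ζ Q - C e') := by
    rw [nrm_mul, C_mul]; ring
  rw [this]
  exact dvd_add (hP.mul_right _) (hQ.mul_left _)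

lemma isN_pow (x : F) : IsN p ζ a (x ^ p) := ⟨C x, by simp [nrm_C]⟩

lemma isN_one : IsN p ζ a (1 : F) := by simpa using isN_pow (p := p) (ζ := ζ) (a := a) 1

lemma IsN.pow {e : F} (h : IsN p ζ a e) (n : ℕ) : IsN p ζ a (e ^ n) := by
  induction n with
  | zero => simpa using isN_one
  | succ n ih => rw [pow_succ]; exact ih.mul h

lemma aeval_eq_zero_of_dvd {R : Type*} [CommRing R] [Algebra F R] {A : R}
    (hA : A ^ p = algebraMap F R a) {Q : F[X]} (h : (X ^ p - C a) ∣ Q) : aeval A Q = 0 := by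
  obtain ⟨S, rfl⟩ := h
  simp [hA]

end basic

section field
variable {F : Type*} [Field F] {p : ℕ} {ζ a : F}

lemma isN_of_pow_coprime (hp : p.Prime) {e : F} {d : ℕ} (hd : d.Coprime p)
    (h : IsN p ζ a (e ^ d)) : IsN p ζ a e := by
  by_cases he : e = 0
  · subst he
    have := isN_pow (p := p) (ζ := ζ) (a := a) 0
    rwa [zero_pow hp.ne_zero] at this
  obtain ⟨m, hm⟩ := Nat.exists_mul_mod_eq_one_of_coprime hd hp.one_lt
  have h1 : d * m = 1 + p * (d * m / p) := by
    have := Nat.mod_add_div (d * m) p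
    omega
  have h2 := (h.pow m).mul (isN_pow (p := p) (ζ := ζ) (a := a) ((e⁻¹) ^ (d * m / p)))
  have h3 : (e ^ d) ^ m * ((e⁻¹) ^ (d * m / p)) ^ p = e := by
    rw [← pow_mul, h1, pow_add, pow_one, ← pow_mul, mul_comm (_ / p) p, ← h1, mul_assoc, ← mul_pow,
      mul_inv_cancel₀ he, one_pow, mul_one]
  rwa [h3] at h2

lemma nrm_comp (hζ : ζ ^ p = 1) (P : F[X]) : (nrm p ζ P).comp (C ζ * X) = nrm p ζ P := by
  have h : ∀ k, (P.comp (C (ζ ^ k) * X)).comp (C ζ * X) = P.comp (C (ζ ^ (k+1)) * X) := by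
    intro k
    rw [comp_assoc]
    simp [pow_succ, mul_assoc]
  cases p with
  | zero => simp [nrm]
  | succ n =>
    rw [nrm, Polynomial.prod_comp, Finset.prod_congr rfl (fun k _ => h k), Finset.prod_range_succ,
      Finset.prod_range_succ', hζ]
    simp

lemma isN_of_root (hp : p.Prime) (hζ : IsPrimitiveRoot ζ p) (ha : a ≠ 0) {r : F} (hr : r ^ p = a)
    (e : F) : IsN p ζ a e := by
  classical
  have hr0 : r ≠ 0 := by rintro rfl; rw [zero_pow hp.ne_zero] at hr; exact ha hr.symm
  have hinj : Set.InjOn (fun s => ζ ^ s * r) (Finset.range p : Set ℕ) := by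
    intro s hs t ht hst
    have := mul_right_cancel₀ hr0 hst
    exact hζ.pow_inj (by simpa using hs) (by simpa using ht) this
  let P : F[X] := Lagrange.interpolate (Finset.range p) (fun s => ζ ^ s * r)
    (fun s => if s = 0 then e else 1)
  have hP : ∀ s ∈ Finset.range p, P.eval (ζ ^ s * r) = if s = 0 then e else 1 := fun s hs =>
    Lagrange.eval_interpolate_at_node _ hinj hs
  refine ⟨P, ?_⟩
  have h0 : (nrm p ζ P).eval r = e := by
    rw [nrm, eval_prod, Finset.prod_eq_single_of_mem 0 (by simpa using hp.pos)]
    · simpa using hP 0 (by simpa using hp.pos)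
    · intro b hb hb0
      have := hP b hb
      simpa [hb0] using this
  have h1 : ∀ s, (nrm p ζ P).eval (ζ ^ s * r) = e := by
    intro s
    induction s with
    | zero => simpa using h0
    | succ s ih =>
      rw [← ih]
      conv_rhs => rw [← nrm_comp hζ.pow_eq_one P]
      simp [pow_succ]
      ring_nf
  rw [X_pow_sub_C_eq_prod hζ hp.pos hr]
  refine Finset.prod_dvd_of_coprime ?_ ?_
  · intro i hi j hj hij
    refine Polynomial.isCoprime_X_sub_C_of_isUnit_sub ?_
    rw [isUnit_iff_ne_zero, sub_ne_zero]
    exact fun h => hij (hinj hi hj h)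
  · intro i _
    rw [dvd_iff_isRoot, IsRoot.def, eval_sub, h1, eval_C, sub_self]

end field

end GenusAux

namespace GenusAux

open Polynomial

/-- The Kummer algebra `F[X]/(X^p - a)`. -/
abbrev Mx {F : Type*} [CommRing F] (p : ℕ) (a : F) := AdjoinRoot (X ^ p - C a : F[X])

section tau
variable {F : Type*} [CommRing F] {p : ℕ} {ζ a : F}

lemma root_pow : (AdjoinRoot.root (X ^ p - C a : F[X])) ^ p = algebraMap F _ a := by
  have := AdjoinRoot.eval₂_root (X ^ p - C a : F[X])
  simpa [sub_eq_zero] using this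

/-- `A ↦ ζ A`. -/
noncomputable def tauHom (a : F) (hζ : ζ ^ p = 1) : Mx p a →ₐ[F] Mx p a :=
  AdjoinRoot.liftAlgHom (X ^ p - C a : F[X]) (Algebra.ofId F (Mx p a))
    (algebraMap F _ ζ * AdjoinRoot.root _) (by
      simp only [eval₂_sub, eval₂_X_pow, eval₂_C]
      rw [mul_pow, root_pow, ← map_pow, hζ]
      simp)

lemma tauHom_root (hζ : ζ ^ p = 1) :
    tauHom a hζ (AdjoinRoot.root _) = algebraMap F _ ζ * AdjoinRoot.root _ := by
  simp [tauHom]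

/-- `A ↦ ζ A` as an automorphism. -/
noncomputable def tau (a : F) (hζ : ζ ^ p = 1) (h0 : p ≠ 0) : Mx p a ≃ₐ[F] Mx p a :=
  AlgEquiv.ofAlgHom (tauHom a hζ) (tauHom (ζ := ζ ^ (p - 1)) a
      (by rw [← pow_mul, mul_comm, pow_mul, hζ, one_pow]))
    (by
      apply AdjoinRoot.algHom_ext
      simp only [AlgHom.comp_apply, tauHom_root, map_mul, AlgHom.commutes, AlgHom.id_apply]
      rw [← mul_assoc, ← map_mul, pow_sub_one_mul h0, hζ, map_one, one_mul])
    (by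
      apply AdjoinRoot.algHom_ext
      simp only [AlgHom.comp_apply, tauHom_root, map_mul, AlgHom.commutes, AlgHom.id_apply]
      rw [← mul_assoc, ← map_mul, mul_pow_sub_one h0, hζ, map_one, one_mul])

lemma tau_root (hζ : ζ ^ p = 1) (h0 : p ≠ 0) :
    tau a hζ h0 (AdjoinRoot.root _) = algebraMap F _ ζ * AdjoinRoot.root _ :=
  tauHom_root hζ

lemma tau_pow_root (hζ : ζ ^ p = 1) (h0 : p ≠ 0) (k : ℕ) :
    (tau a hζ h0 ^ k) (AdjoinRoot.root _) = algebraMap F _ ζ ^ k * AdjoinRoot.root _ := by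
  induction k with
  | zero => simp
  | succ k ih =>
    rw [pow_succ', AlgEquiv.mul_apply, ih, map_mul, map_pow, AlgEquiv.commutes, tau_root, pow_succ]
    ring

lemma tau_pow_mk (hζ : ζ ^ p = 1) (h0 : p ≠ 0) (k : ℕ) (P : F[X]) :
    (tau a hζ h0 ^ k) (AdjoinRoot.mk _ P) =
      aeval (algebraMap F _ ζ ^ k * AdjoinRoot.root (X ^ p - C a)) P := by
  rw [← AdjoinRoot.aeval_eq, ← tau_pow_root hζ h0]
  exact (Polynomial.aeval_algHom_apply ((tau a hζ h0 ^ k : Mx p a ≃ₐ[F] Mx p a) : Mx p a →ₐ[F] Mx p a) _ P).symm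

lemma tau_pow_p (hζ : ζ ^ p = 1) (h0 : p ≠ 0) : tau a hζ h0 ^ p = 1 := by
  apply AlgEquiv.coe_toAlgHom_injective
  apply AdjoinRoot.algHom_ext
  have := tau_pow_root (a := a) hζ h0 p
  rw [← map_pow, hζ, map_one, one_mul] at this
  simpa using this

lemma isN_iff (hζ : ζ ^ p = 1) (h0 : p ≠ 0) (e : F) : IsN p ζ a e ↔
    ∃ x : Mx p a, ∏ k ∈ Finset.range p, (tau a hζ h0 ^ k) x = algebraMap F _ e := by
  have key : ∀ P : F[X], ∏ k ∈ Finset.range p, (tau a hζ h0 ^ k) (AdjoinRoot.mk _ P) =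
      AdjoinRoot.mk _ (nrm p ζ P) := by
    intro P
    rw [← AdjoinRoot.aeval_eq (nrm p ζ P), aeval_nrm]
    exact Finset.prod_congr rfl (fun k _ => tau_pow_mk hζ h0 k P)
  constructor
  · rintro ⟨P, hP⟩
    refine ⟨AdjoinRoot.mk _ P, ?_⟩
    rw [key]
    exact AdjoinRoot.mk_eq_mk.2 hP
  · rintro ⟨x, hx⟩
    induction x using AdjoinRoot.induction_on with
    | _ P =>
    rw [key] at hx
    exact ⟨P, AdjoinRoot.mk_eq_mk.1 hx⟩

lemma monic_XpC (hp : p ≠ 0) : (X ^ p - C a : F[X]).Monic := monic_X_pow_sub_C a hp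

lemma natDegree_XpC [Nontrivial F] : (X ^ p - C a : F[X]).natDegree = p := natDegree_X_pow_sub_C

lemma fix_tau [IsDomain F] (hp : p ≠ 0) (hζ : IsPrimitiveRoot ζ p) (h0 : p ≠ 0) (x : Mx p a)
    (hx : tau a hζ.pow_eq_one h0 x = x) : ∃ c : F, x = algebraMap F _ c := by
  induction x using AdjoinRoot.induction_on with
  | _ P =>
  have hm := monic_XpC (a := a) hp
  set Q := P %ₘ (X ^ p - C a) with hQ
  have hPQ : AdjoinRoot.mk (X ^ p - C a) P = AdjoinRoot.mk (X ^ p - C a) Q :=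
    (AdjoinRoot.mk_leftInverse hm (AdjoinRoot.mk _ P)).symm
  rw [hPQ] at hx ⊢
  have hQd : Q.natDegree < p := by
    have := natDegree_modByMonic_lt P hm (by
      intro h
      have := congrArg natDegree h
      rw [natDegree_XpC, natDegree_one] at this
      exact hp this)
    rwa [natDegree_XpC] at this
  have h1 := tau_pow_mk (a := a) hζ.pow_eq_one h0 1 Q
  rw [pow_one, hx, pow_one] at h1
  have h2 : AdjoinRoot.mk (X ^ p - C a) Q = AdjoinRoot.mk (X ^ p - C a) (Q.comp (C ζ * X)) := by
    rw [h1, ← AdjoinRoot.aeval_eq, aeval_comp]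
    simp
  rw [AdjoinRoot.mk_eq_mk] at h2
  have h3 : Q - Q.comp (C ζ * X) = 0 := by
    by_contra hne
    have h4 := natDegree_le_of_dvd h2 hne
    rw [natDegree_XpC] at h4
    have h5 : (Q - Q.comp (C ζ * X)).natDegree ≤ Q.natDegree := by
      refine (natDegree_sub_le _ _).trans (max_le le_rfl ?_)
      refine natDegree_comp_le.trans ?_
      calc Q.natDegree * _ ≤ Q.natDegree * 1 := by
            gcongr
            exact (natDegree_C_mul_le _ _).trans natDegree_X_le
        _ = _ := by simp
    omega
  refine ⟨Q.coeff 0, ?_⟩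
  have h6 : Q = C (Q.coeff 0) := by
    ext n
    rcases Nat.eq_zero_or_pos n with rfl | hn
    · simp
    rw [coeff_C, if_neg hn.ne']
    by_cases hnp : p ≤ n
    · exact coeff_eq_zero_of_natDegree_lt (by omega)
    · have h7 := congrArg (fun R => coeff R n) h3
      simp only [coeff_sub, comp_C_mul_X_coeff, coeff_zero] at h7
      have h8 : Q.coeff n * (1 - ζ ^ n) = 0 := by linear_combination h7
      rcases mul_eq_zero.1 h8 with h | h
      · exact h
      · exact absurd (sub_eq_zero.1 h).symm (hζ.pow_ne_one_of_pos_of_lt hn.ne' (by omega))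
  conv_lhs => rw [h6]
  rfl

lemma finiteMx (hp : p ≠ 0) : Module.Finite F (Mx p a) :=
  (AdjoinRoot.powerBasis' (monic_XpC hp)).finite

lemma freeMx (hp : p ≠ 0) : Module.Free F (Mx p a) :=
  Module.Free.of_basis (AdjoinRoot.powerBasis' (monic_XpC hp)).basis

lemma finrankMx [Nontrivial F] (hp : p ≠ 0) : Module.finrank F (Mx p a) = p := by
  rw [(AdjoinRoot.powerBasis' (monic_XpC hp)).finrank, AdjoinRoot.powerBasis'_dim, natDegree_XpC]

lemma injMx [IsDomain F] (hp : p ≠ 0) : Function.Injective (algebraMap F (Mx p a)) := by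
  apply AdjoinRoot.of.injective_of_degree_ne_zero
  rw [degree_X_pow_sub_C (Nat.pos_of_ne_zero hp)]
  exact_mod_cast hp

lemma M_induction {C : Mx p a → Prop} (hadd : ∀ x y, C x → C y → C (x + y))
    (hm : ∀ (c : F) (t : ℕ), C (algebraMap _ _ c * AdjoinRoot.root _ ^ t)) (x : Mx p a) : C x := by
  induction x using AdjoinRoot.induction_on with
  | _ P =>
  induction P using Polynomial.induction_on' with
  | add f g hf hg => rw [map_add]; exact hadd _ _ hf hg
  | monomial n c =>
    rw [← C_mul_X_pow_eq_monomial, map_mul, map_pow, AdjoinRoot.mk_X]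
    exact hm c n

end tau

end GenusAux

namespace GenusAux

open Polynomial

section cyc
variable {F : Type*} [Field F] {p : ℕ} {ζ a b : F}

/-- `N = M[Y]/(Y^p - b)`. -/
abbrev Nx (p : ℕ) (a b : F) := Mx p (algebraMap F (Mx p a) b)

/-- The element `A` of `N`. -/
noncomputable def elA (p : ℕ) (a b : F) : Nx p a b :=
  algebraMap (Mx p a) (Nx p a b) (AdjoinRoot.root _)

/-- The element `θ` of `N`. -/
noncomputable def elT (p : ℕ) (a b : F) : Nx p a b := AdjoinRoot.root _

/-- Extension of `tau` fixing `θ`. -/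
noncomputable def tauN (a b : F) (hζ : ζ ^ p = 1) (h0 : p ≠ 0) : Nx p a b →ₐ[F] Nx p a b :=
  AdjoinRoot.liftAlgHom (X ^ p - C (algebraMap F (Mx p a) b))
    ((IsScalarTower.toAlgHom F (Mx p a) (Nx p a b)).comp (tau a hζ h0 : Mx p a →ₐ[F] Mx p a))
    (elT p a b) (by
      simp only [eval₂_sub, eval₂_X_pow, eval₂_C, elT]
      rw [root_pow]
      change _ - algebraMap (Mx p a) (Nx p a b) (tau a hζ h0 (algebraMap F (Mx p a) b)) = 0
      rw [AlgEquiv.commutes, sub_self])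

lemma tauN_T (hζ : ζ ^ p = 1) (h0 : p ≠ 0) : tauN a b hζ h0 (elT p a b) = elT p a b := by
  rw [tauN]
  exact AdjoinRoot.liftAlgHom_root _ _ _ _

lemma tauN_M (hζ : ζ ^ p = 1) (h0 : p ≠ 0) (m : Mx p a) :
    tauN a b hζ h0 (algebraMap _ _ m) = algebraMap _ _ (tau a hζ h0 m) := by
  rw [tauN]
  exact AdjoinRoot.liftAlgHom_of (X ^ p - C (algebraMap F (Mx p a) b)) _ _ _ m

lemma elT_pow : elT p a b ^ p = algebraMap F _ b := by
  rw [elT, root_pow, ← IsScalarTower.algebraMap_apply]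

lemma elA_pow : elA p a b ^ p = algebraMap F _ a := by
  rw [elA, ← map_pow, root_pow, ← IsScalarTower.algebraMap_apply]

variable (hζ : ζ ^ p = 1) (h0 : p ≠ 0)

lemma zM (hζ : ζ ^ p = 1) : (algebraMap F (Mx p a) ζ) ^ p = 1 := by
  rw [← map_pow, hζ, map_one]

/-- `θ ↦ ζ θ`. -/
noncomputable def rhoN (a b : F) (hζ : ζ ^ p = 1) (h0 : p ≠ 0) : Nx p a b ≃ₐ[Mx p a] Nx p a b :=
  tau (F := Mx p a) (algebraMap F (Mx p a) b) (zM hζ) h0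

lemma rhoN_T : rhoN a b hζ h0 (elT p a b) = algebraMap F _ ζ * elT p a b := by
  rw [rhoN, elT, tau_root, ← IsScalarTower.algebraMap_apply]

lemma rhoN_A : rhoN a b hζ h0 (elA p a b) = elA p a b := by
  simp only [elA, AlgEquiv.commutes]

/-- Every element of `N` is a combination of `A^s θ^t`. -/
lemma N_induction {C : Nx p a b → Prop} (hadd : ∀ x y, C x → C y → C (x + y))
    (hm : ∀ (m : Mx p a) (t : ℕ), C (algebraMap _ _ m * elT p a b ^ t)) (x : Nx p a b) : C x := by
  induction x using AdjoinRoot.induction_on with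
  | _ P =>
  induction P using Polynomial.induction_on' with
  | add f g hf hg => rw [map_add]; exact hadd _ _ hf hg
  | monomial n c =>
    rw [← C_mul_X_pow_eq_monomial, map_mul, map_pow, AdjoinRoot.mk_X]
    exact hm c n

lemma tau_rho (x : Nx p a b) :
    tauN a b hζ h0 (rhoN a b hζ h0 x) = rhoN a b hζ h0 (tauN a b hζ h0 x) := by
  induction x using N_induction with
  | hadd x y hx hy => simp only [map_add, hx, hy]
  | hm m t =>
    simp only [map_mul, map_pow, AlgEquiv.commutes, tauN_M, tauN_T, rhoN_T, AlgHom.commutes]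

/-- Right multiplication by `A`. -/
noncomputable def RA (a b : F) (hζ : ζ ^ p = 1) (h0 : p ≠ 0) : Module.End F (Nx p a b) :=
  LinearMap.mulLeft F (elA p a b) ∘ₗ ((rhoN a b hζ h0).toLinearMap.restrictScalars F)

/-- Right multiplication by `θ`. -/
noncomputable def RJ (p : ℕ) (a b : F) : Module.End F (Nx p a b) := LinearMap.mulLeft F (elT p a b)

/-- The cyclic algebra `(a, b)`. -/
noncomputable def Dalg (a b : F) (hζ : ζ ^ p = 1) (h0 : p ≠ 0) : Subalgebra F (Module.End F (Nx p a b)) :=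
  Subalgebra.centralizer F {RA a b hζ h0, RJ p a b}

lemma mem_D {d : Module.End F (Nx p a b)} : d ∈ Dalg a b hζ h0 ↔
    (∀ x, d (elA p a b * rhoN a b hζ h0 x) = elA p a b * rhoN a b hζ h0 (d x)) ∧
    (∀ x, d (elT p a b * x) = elT p a b * d x) := by
  rw [Dalg, Subalgebra.mem_centralizer_iff]
  constructor
  · intro h
    exact ⟨fun x => (LinearMap.congr_fun (h _ (Set.mem_insert _ _)) x).symm,
      fun x => (LinearMap.congr_fun (h _ (Set.mem_insert_of_mem _ rfl)) x).symm⟩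
  · rintro ⟨h1, h2⟩ g (rfl | rfl)
    · exact LinearMap.ext (fun x => (h1 x).symm)
    · exact LinearMap.ext (fun x => (h2 x).symm)

/-- Left multiplication by `m`. -/
noncomputable def Lm (b : F) (m : Mx p a) : Module.End F (Nx p a b) :=
  LinearMap.mulLeft F (algebraMap (Mx p a) (Nx p a b) m)

/-- Left multiplication by `j`. -/
noncomputable def Jop (a b : F) (hζ : ζ ^ p = 1) (h0 : p ≠ 0) : Module.End F (Nx p a b) :=
  LinearMap.mulLeft F (elT p a b) ∘ₗ (tauN a b hζ h0).toLinearMap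

lemma Lm_apply (m : Mx p a) (x : Nx p a b) : Lm b m x = algebraMap _ _ m * x := rfl
lemma Jop_apply (x : Nx p a b) : Jop a b hζ h0 x = elT p a b * tauN a b hζ h0 x := rfl

lemma Lm_mem (m : Mx p a) : Lm b m ∈ Dalg a b hζ h0 := by
  rw [mem_D]
  simp only [Lm_apply, map_mul, AlgEquiv.commutes]
  exact ⟨fun x => by ring, fun x => by ring⟩

lemma Jop_mem : Jop a b hζ h0 ∈ Dalg a b hζ h0 := by
  rw [mem_D]
  simp only [Jop_apply, map_mul, tauN_T, tau_rho, rhoN_T]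
  refine ⟨fun x => ?_, fun x => trivial⟩
  have : tauN a b hζ h0 (elA p a b) = algebraMap F _ ζ * elA p a b := by
    rw [elA, tauN_M, tau_root, map_mul, ← IsScalarTower.algebraMap_apply]
  rw [this]; ring

lemma D_ext0 {d : Module.End F (Nx p a b)} (hd : d ∈ Dalg a b hζ h0) (h1 : d 1 = 0) : d = 0 := by
  rw [mem_D] at hd
  have hA : ∀ s, d (elA p a b ^ s) = 0 := by
    intro s
    induction s with
    | zero => simpa using h1
    | succ s ih =>
      have := hd.1 (elA p a b ^ s)
      rw [ih, map_zero, mul_zero, map_pow, rhoN_A, ← pow_succ'] at this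
      exact this
  have hM : ∀ m : Mx p a, d (algebraMap _ _ m) = 0 := by
    intro m
    induction m using M_induction with
    | hadd x y hx hy => rw [map_add, map_add, hx, hy, add_zero]
    | hm c t =>
      rw [map_mul, map_pow, ← IsScalarTower.algebraMap_apply, ← Algebra.smul_def, map_smul]
      change c • d (elA p a b ^ t) = 0
      rw [hA, smul_zero]
  ext x
  induction x using N_induction with
  | hadd x y hx hy => rw [map_add, map_add, hx, hy]
  | hm m t =>
    induction t with
    | zero => simpa using hM m
    | succ t ih =>
      have : algebraMap _ _ m * elT p a b ^ (t + 1) =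
        elT p a b * (algebraMap _ _ m * elT p a b ^ t) := by ring
      rw [this, hd.2, ih]
      simp

lemma D_ext {d d' : Module.End F (Nx p a b)} (hd : d ∈ Dalg a b hζ h0) (hd' : d' ∈ Dalg a b hζ h0)
    (h1 : d 1 = d' 1) : d = d' :=
  sub_eq_zero.1 (D_ext0 hζ h0 (sub_mem hd hd') (by simp [h1]))

lemma Jop_pow_one (t : ℕ) : (Jop a b hζ h0 ^ t) 1 = elT p a b ^ t := by
  induction t with
  | zero => simp
  | succ t ih => rw [pow_succ', Module.End.mul_apply, ih, Jop_apply, map_pow, tauN_T, pow_succ']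

lemma D_surj (x : Nx p a b) : ∃ d ∈ Dalg a b hζ h0, d 1 = x := by
  induction x using N_induction with
  | hadd x y hx hy =>
    obtain ⟨d, hd, rfl⟩ := hx
    obtain ⟨d', hd', rfl⟩ := hy
    exact ⟨d + d', add_mem hd hd', rfl⟩
  | hm m t =>
    refine ⟨Lm b m * Jop a b hζ h0 ^ t, mul_mem (Lm_mem hζ h0 m) (pow_mem (Jop_mem hζ h0) t), ?_⟩
    rw [Module.End.mul_apply, Jop_pow_one, Lm_apply]

/-- `D ≃ N`, `d ↦ d 1`. -/
noncomputable def D_equiv : Dalg a b hζ h0 ≃ₗ[F] Nx p a b :=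
  LinearEquiv.ofBijective ((LinearMap.applyₗ (1 : Nx p a b)) ∘ₗ (Dalg a b hζ h0).val.toLinearMap)
    ⟨fun d d' h => Subtype.ext (D_ext hζ h0 d.2 d'.2 h), fun x => by
      obtain ⟨d, hd, h⟩ := D_surj hζ h0 x
      exact ⟨⟨d, hd⟩, h⟩⟩

lemma finrank_D (hp : p ≠ 0) : FiniteDimensional F (Dalg a b hζ h0) ∧
    Module.finrank F (Dalg a b hζ h0) = p ^ 2 := by
  have h1 : Module.Finite F (Mx p a) := finiteMx hp
  have h2 : Module.Finite (Mx p a) (Nx p a b) := finiteMx hp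
  have h4 : Module.Free F (Mx p a) := freeMx hp
  have h5 : Module.Free (Mx p a) (Nx p a b) := freeMx hp
  have : Nontrivial (Mx p a) := (injMx hp).nontrivial
  have h3 : Module.Finite F (Nx p a b) := Module.Finite.trans (Mx p a) _
  refine ⟨Module.Finite.equiv (D_equiv hζ h0).symm, ?_⟩
  rw [(D_equiv hζ h0).finrank_eq, ← Module.finrank_mul_finrank F (Mx p a), finrankMx hp,
    finrankMx hp, sq]

/-- `i`. -/
noncomputable def Di : Dalg a b hζ h0 := ⟨Lm b (AdjoinRoot.root _), Lm_mem hζ h0 _⟩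
/-- `j`. -/
noncomputable def Dj : Dalg a b hζ h0 := ⟨Jop a b hζ h0, Jop_mem hζ h0⟩

lemma Di_pow : (Di hζ h0 : Dalg a b hζ h0) ^ p = algebraMap F _ a := by
  apply Subtype.ext
  have : ∀ t, (Lm b (AdjoinRoot.root (X ^ p - C a))) ^ t = LinearMap.mulLeft F (elA p a b ^ t) := by
    intro t
    rw [← LinearMap.pow_mulLeft]; rfl
  change (Lm b (AdjoinRoot.root (X ^ p - C a))) ^ p = algebraMap F _ a
  rw [this, elA_pow]
  ext x
  simp [Algebra.smul_def]

lemma Jop_pow (k : ℕ) (x : Nx p a b) :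
    (Jop a b hζ h0 ^ k) x = elT p a b ^ k * (tauN a b hζ h0 ^ k) x := by
  induction k with
  | zero => simp
  | succ k ih =>
    rw [pow_succ', Module.End.mul_apply, ih, Jop_apply, map_mul, map_pow, tauN_T,
      pow_succ' (tauN a b hζ h0), AlgHom.mul_apply, pow_succ]
    ring

lemma Dj_pow : (Dj hζ h0 : Dalg a b hζ h0) ^ p = algebraMap F _ b := by
  apply Subtype.ext
  apply D_ext hζ h0 (SetLike.coe_mem _) (SetLike.coe_mem _)
  change (Jop a b hζ h0 ^ p) 1 = (algebraMap F (Module.End F (Nx p a b)) b) 1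
  rw [Jop_pow_one, elT_pow]
  simp [Algebra.smul_def]

lemma DjDi : (Dj hζ h0 * Di hζ h0 : Dalg a b hζ h0) = ζ • (Di hζ h0 * Dj hζ h0) := by
  apply Subtype.ext
  ext x
  change Jop a b hζ h0 (Lm b _ x) = ζ • (Lm b _ (Jop a b hζ h0 x))
  simp only [Lm_apply, Jop_apply, map_mul, tauN_M, tau_root, ← IsScalarTower.algebraMap_apply,
    Algebra.smul_def]
  ring

/-- `M → D`. -/
noncomputable def LmHom : Mx p a →ₐ[F] Dalg a b hζ h0 where
  toFun m := ⟨Lm b m, Lm_mem hζ h0 m⟩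
  map_one' := by
    apply Subtype.ext; apply LinearMap.ext; intro x
    change algebraMap (Mx p a) (Nx p a b) 1 * x = x
    rw [map_one, one_mul]
  map_mul' m n := by
    apply Subtype.ext; apply LinearMap.ext; intro x
    change algebraMap (Mx p a) (Nx p a b) (m * n) * x = algebraMap _ _ m * (algebraMap _ _ n * x)
    rw [map_mul, mul_assoc]
  map_zero' := by
    apply Subtype.ext; apply LinearMap.ext; intro x
    change algebraMap (Mx p a) (Nx p a b) 0 * x = 0
    rw [map_zero, zero_mul]
  map_add' m n := by
    apply Subtype.ext; apply LinearMap.ext; intro x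
    change algebraMap (Mx p a) (Nx p a b) (m + n) * x = algebraMap _ _ m * x + algebraMap _ _ n * x
    rw [map_add, add_mul]
  commutes' r := by
    apply Subtype.ext; apply LinearMap.ext; intro x
    change algebraMap (Mx p a) (Nx p a b) (algebraMap F _ r) * x = r • x
    rw [← IsScalarTower.algebraMap_apply, Algebra.smul_def]

lemma LmHom_root : LmHom (a := a) (b := b) hζ h0 (AdjoinRoot.root _) = Di hζ h0 := rfl

lemma aeval_Di (P : F[X]) : ((aeval (Di hζ h0 : Dalg a b hζ h0) P : Dalg a b hζ h0)) =
    LmHom hζ h0 (AdjoinRoot.mk _ P) := by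
  rw [← AdjoinRoot.aeval_eq]
  exact Polynomial.aeval_algHom_apply (LmHom hζ h0) (AdjoinRoot.root _) P

lemma centralizer_Di [IsDomain (Mx p a)] (ha : a ≠ 0) (hz : IsPrimitiveRoot ζ p) (d : Dalg a b hζ h0)
    (h : d * Di hζ h0 = Di hζ h0 * d) :
    ∃ P : F[X], d = aeval (Di hζ h0) P := by
  obtain ⟨d, hd⟩ := d
  have hd' := (mem_D hζ h0).1 hd
  have h1 : d (elA p a b) = elA p a b * d 1 := by
    have := congrArg (fun x : Dalg a b hζ h0 => (x : Module.End F (Nx p a b)) 1) h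
    change d (Lm b _ 1) = Lm b _ (d 1) at this
    rw [Lm_apply, Lm_apply, mul_one] at this
    exact this
  have h2 := hd'.1 1
  rw [map_one, mul_one, h1] at h2
  have hA : IsUnit (elA p a b) := by
    rw [← isUnit_pow_iff h0, elA_pow]
    exact (isUnit_iff_ne_zero.2 ha).map _
  have h3 := hA.mul_left_cancel h2
  have hzM : IsPrimitiveRoot (algebraMap F (Mx p a) ζ) p :=
    hz.map_of_injective (injMx h0)
  obtain ⟨m, hm⟩ := fix_tau (F := Mx p a) h0 hzM h0 (d 1) h3.symm
  induction m using AdjoinRoot.induction_on with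
  | _ P =>
  refine ⟨P, ?_⟩
  apply Subtype.ext
  apply D_ext hζ h0 hd (SetLike.coe_mem _)
  rw [aeval_Di]
  change d 1 = algebraMap _ _ _ * 1
  rw [mul_one]
  exact hm

end cyc

end GenusAux

namespace GenusAux

open Polynomial

lemma semilin_norm {M W : Type*} [CommRing M] [AddCommGroup W] [Module M W] {r : ℕ}
    (v : Module.Basis (Fin r) M W) (τ : M →+* M) (J : W →+ W) (hJ : ∀ (m : M) x, J (m • x) = τ m • J x)
    (p : ℕ) (β : M) (hp : ∀ x, J^[p] x = β • x) :
    ∃ m, ∏ s ∈ Finset.range p, τ^[s] m = β ^ r := by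
  classical
  let c : ℕ → Matrix (Fin r) (Fin r) M := fun k => Matrix.of fun i j => v.repr (J^[k] (v i)) j
  have hc : ∀ k, c (k + 1) = (c k).map τ * c 1 := by
    intro k
    ext i l
    have h1 : J^[k + 1] (v i) = ∑ j, τ (c k i j) • J (v j) := by
      rw [Function.iterate_succ_apply']
      conv_lhs => rw [← v.sum_repr (J^[k] (v i))]
      rw [map_sum]
      simp only [hJ]
      rfl
    rw [Matrix.mul_apply]
    change v.repr (J^[k + 1] (v i)) l = _
    rw [h1]
    simp [c]
  have hd : ∀ k, (c k).det = ∏ s ∈ Finset.range k, τ^[s] (c 1).det := by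
    intro k
    induction k with
    | zero =>
      have : c 0 = 1 := by
        ext i j
        simp [c, Matrix.one_apply, Finsupp.single_apply]
      simp [this]
    | succ k ih =>
      rw [hc, Matrix.det_mul, Finset.prod_range_succ']
      have : ((c k).map τ).det = τ (c k).det := by
        rw [RingHom.map_det]; rfl
      rw [this, ih, map_prod]
      simp only [Function.iterate_succ_apply', Function.iterate_zero, id]
  refine ⟨(c 1).det, ?_⟩
  rw [← hd]
  have : c p = β • (1 : Matrix (Fin r) (Fin r) M) := by
    ext i j
    simp [c, hp, Matrix.one_apply, Finsupp.single_apply]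
  rw [this, Matrix.det_smul]
  simp

lemma sub_facts {M N : Type*} [CommRing M] (hF : IsField M) [AddCommGroup N] [Module M N]
    [Module.Finite M N] (W : Submodule M N) (hne : W ≠ ⊥) :
    Nonempty (Module.Basis (Fin (Module.finrank M W)) M W) ∧
      (Module.finrank M W = Module.finrank M N → W = ⊤) ∧ Module.finrank M W ≠ 0 ∧
      Module.finrank M W ≤ Module.finrank M N := by
  let _ := hF.toField
  refine ⟨⟨Module.finBasis M W⟩, Submodule.eq_top_of_finrank_eq, ?_, Submodule.finrank_le W⟩
  rwa [Ne, Submodule.finrank_eq_zero]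

section dom
variable {F : Type*} [Field F] {p : ℕ} {ζ a b : F}

lemma tau_iterate (hζ : ζ ^ p = 1) (h0 : p ≠ 0) (s : ℕ) (m : Mx p a) :
    ((tau a hζ h0 : Mx p a →+* Mx p a))^[s] m = (tau a hζ h0 ^ s) m := by
  induction s with
  | zero => rfl
  | succ s ih => rw [Function.iterate_succ_apply', ih, pow_succ', AlgEquiv.mul_apply]; rfl

set_option maxHeartbeats 1000000 in
lemma stable_submodule (hp : p.Prime) (hζ : ζ ^ p = 1) (h0 : p ≠ 0) (hirr : Irreducible (X ^ p - C a : F[X]))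
    (hb : ¬ IsN p ζ a b) (W : Submodule (Mx p a) (Nx p a b)) (hW : ∀ w ∈ W, Jop a b hζ h0 w ∈ W) 
    (hne : W ≠ ⊥) : W = ⊤ := by
  have : Fact (Irreducible (X ^ p - C a : F[X])) := ⟨hirr⟩
  have hF : IsField (Mx p a) := @Field.toIsField (Mx p a) AdjoinRoot.instField
  have hfin : Module.Finite (Mx p a) (Nx p a b) := finiteMx h0
  have hrank : Module.finrank (Mx p a) (Nx p a b) = p := finrankMx (F := Mx p a) h0
  obtain ⟨⟨v⟩, h1, h2, h3⟩ := sub_facts hF W hne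
  rw [hrank] at h1 h3
  by_contra htop
  have hlt : Module.finrank (Mx p a) W < p := lt_of_le_of_ne h3 (fun h => htop (h1 h))
  generalize Module.finrank (Mx p a) W = r at *
  have hsmul : ∀ (m : Mx p a) (x : Nx p a b), Jop a b hζ h0 (m • x) =
      tau a hζ h0 m • Jop a b hζ h0 x := by
    intro m x
    rw [Jop_apply, Jop_apply, Algebra.smul_def, Algebra.smul_def, map_mul, tauN_M]
    ring
  have hpow : ∀ x : Nx p a b, (Jop a b hζ h0 ^ p) x = algebraMap F (Mx p a) b • x := by
    intro x
    have := congrArg (fun d : Dalg a b hζ h0 => (d : Module.End F (Nx p a b)) x) (Dj_pow hζ h0)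
    change (Jop a b hζ h0 ^ p) x = b • x at this
    rw [this, algebraMap_smul]
  let J : W →+ W := 
    { toFun := fun w => ⟨Jop a b hζ h0 w, hW w w.2⟩
      map_zero' := by apply Subtype.ext; exact map_zero (Jop a b hζ h0)
      map_add' := fun x y => by apply Subtype.ext; exact map_add (Jop a b hζ h0) _ _ }
  have hJ : ∀ k x, ((J^[k] x : W) : Nx p a b) = (Jop a b hζ h0 ^ k) x := by
    intro k x
    induction k with
    | zero => rfl
    | succ k ih =>
      rw [Function.iterate_succ_apply', pow_succ', Module.End.mul_apply, ← ih]; rfl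
  obtain ⟨m, hm⟩ := semilin_norm v (tau a hζ h0 : Mx p a →+* Mx p a) J
    (fun m x => Subtype.ext (hsmul m x)) p (algebraMap F (Mx p a) b)
    (fun x => Subtype.ext (by rw [hJ, hpow, Submodule.coe_smul]))
  simp only [tau_iterate] at hm
  rw [← map_pow] at hm
  have h4 : IsN p ζ a (b ^ r) := (isN_iff hζ h0 _).2 ⟨m, hm⟩
  exact hb (isN_of_pow_coprime hp (Nat.Coprime.symm ((Nat.Prime.coprime_iff_not_dvd hp).2
    (fun h => absurd (Nat.le_of_dvd (Nat.pos_of_ne_zero h2) h) (by omega)))) h4)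

set_option maxHeartbeats 1000000 in
lemma D_noZeroDiv (hp : p.Prime) (hζ : ζ ^ p = 1) (h0 : p ≠ 0)
    (hirr : Irreducible (X ^ p - C a : F[X])) (hb : ¬ IsN p ζ a b) (x y : Dalg a b hζ h0)
    (hxy : x * y = 0) : x = 0 ∨ y = 0 := by
  by_contra! hne
  let W : Submodule (Mx p a) (Nx p a b) :=
    { carrier := {n | ∃ d : Dalg a b hζ h0, d * y = 0 ∧ (d : Module.End F (Nx p a b)) 1 = n}
      zero_mem' := ⟨0, zero_mul _, rfl⟩
      add_mem' := by
        rintro _ _ ⟨d, hd, rfl⟩ ⟨d', hd', rfl⟩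
        exact ⟨d + d', by rw [add_mul, hd, hd', add_zero], rfl⟩
      smul_mem' := by
        rintro m _ ⟨d, hd, rfl⟩
        refine ⟨LmHom hζ h0 m * d, by rw [mul_assoc, hd, mul_zero], ?_⟩
        exact (Algebra.smul_def m _).symm }
  have hW : W = ⊤ := by
    apply stable_submodule hp hζ h0 hirr hb
    · rintro _ ⟨d, hd, rfl⟩
      exact ⟨Dj hζ h0 * d, by rw [mul_assoc, hd, mul_zero], rfl⟩
    · intro h
      have hx : (x : Module.End F (Nx p a b)) 1 ∈ W := ⟨x, hxy, rfl⟩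
      rw [h, Submodule.mem_bot] at hx
      exact hne.1 (Subtype.ext (D_ext0 hζ h0 x.2 hx))
  have h1 : (1 : Nx p a b) ∈ W := by rw [hW]; trivial
  obtain ⟨d, hd, hd1⟩ := h1
  have : d = 1 := Subtype.ext (D_ext hζ h0 d.2 (SetLike.coe_mem 1) hd1)
  rw [this, one_mul] at hd
  exact hne.2 hd

lemma irr_of_not_isN (hp : p.Prime) (hζ : IsPrimitiveRoot ζ p) (ha : a ≠ 0) {e : F}
    (he : ¬ IsN p ζ a e) : Irreducible (X ^ p - C a : F[X]) :=
  X_pow_sub_C_irreducible_of_prime hp (fun _ hr => he (isN_of_root hp hζ ha hr e))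

set_option maxHeartbeats 1000000 in
lemma D_center (hp : p.Prime) (hζ : IsPrimitiveRoot ζ p) (ha : a ≠ 0) (hb0 : b ≠ 0) (h0 : p ≠ 0)
    (hirr : Irreducible (X ^ p - C a : F[X]))
    (d : Dalg a b hζ.pow_eq_one h0)
    (hi : d * Di hζ.pow_eq_one h0 = Di hζ.pow_eq_one h0 * d)
    (hj : d * Dj hζ.pow_eq_one h0 = Dj hζ.pow_eq_one h0 * d) : ∃ c : F, d = algebraMap F _ c := by
  have : Fact (Irreducible (X ^ p - C a : F[X])) := ⟨hirr⟩
  have hF : IsField (Mx p a) := @Field.toIsField (Mx p a) AdjoinRoot.instField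
  have : IsDomain (Mx p a) := hF.isDomain
  obtain ⟨P, rfl⟩ := centralizer_Di _ h0 ha hζ d hi
  rw [aeval_Di] at hj ⊢
  obtain ⟨m, hm⟩ : ∃ m, AdjoinRoot.mk (X ^ p - C a) P = m := ⟨_, rfl⟩
  rw [hm] at hj ⊢
  have h1 := congrArg (fun d : Dalg a b hζ.pow_eq_one h0 => (d : Module.End F (Nx p a b)) 1) hj
  change Lm b m (Jop a b hζ.pow_eq_one h0 1) = Jop a b hζ.pow_eq_one h0 (Lm b m 1) at h1
  rw [Lm_apply, Lm_apply, Jop_apply, Jop_apply, map_one, mul_one, mul_one, tauN_M, mul_comm] at h1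
  have hT : IsUnit (elT p a b) := by
    rw [← isUnit_pow_iff h0, elT_pow]
    exact (isUnit_iff_ne_zero.2 hb0).map _
  have h2 := injMx (F := Mx p a) h0 (hT.mul_left_cancel h1)
  obtain ⟨c, rfl⟩ := fix_tau h0 hζ h0 m h2.symm
  exact ⟨c, AlgHom.commutes _ _⟩

end dom

set_option maxHeartbeats 2000000 in
/-- Existence of the cyclic division algebra. -/
theorem exists_cyclic {F : Type u} [Field F] {p : ℕ} {ζ a b : F} (hp : p.Prime)
    (hζ : IsPrimitiveRoot ζ p) (ha : a ≠ 0) (hb0 : b ≠ 0) (hb : ¬ IsN p ζ a b) :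
    ∃ (D : Type u) (_ : DivisionRing D) (_ : Algebra F D) (i j : D),
      Algebra.IsCentral F D ∧ FiniteDimensional F D ∧ Module.finrank F D = p ^ 2 ∧
      i ^ p = algebraMap F D a ∧ j ^ p = algebraMap F D b ∧ j * i = ζ • (i * j) ∧
      ∀ d, d * i = i * d → ∃ P : F[X], d = aeval i P := by
  have h0 : p ≠ 0 := hp.ne_zero
  have hirr := irr_of_not_isN hp hζ ha hb
  have : Fact (Irreducible (X ^ p - C a : F[X])) := ⟨hirr⟩
  have hF : IsField (Mx p a) := @Field.toIsField (Mx p a) AdjoinRoot.instField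
  have : IsDomain (Mx p a) := hF.isDomain
  have hfin := finrank_D (a := a) (b := b) hζ.pow_eq_one h0 h0
  have hfd := hfin.1
  have hnt : Nontrivial (Dalg a b hζ.pow_eq_one h0) := by
    apply Module.nontrivial_of_finrank_pos (R := F)
    rw [hfin.2]; positivity
  have hnz : NoZeroDivisors (Dalg a b hζ.pow_eq_one h0) :=
    ⟨fun {x y} h => D_noZeroDiv hp hζ.pow_eq_one h0 hirr hb x y h⟩
  have hdom : IsDomain (Dalg a b hζ.pow_eq_one h0) :=
    @NoZeroDivisors.to_isDomain (Dalg a b hζ.pow_eq_one h0) inferInstance hnt hnz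
  refine ⟨Dalg a b hζ.pow_eq_one h0, divisionRingOfFiniteDimensional F _, inferInstance,
    Di _ h0, Dj _ h0, ?_, hfin.1, hfin.2, Di_pow _ h0, Dj_pow _ h0, DjDi _ h0,
    fun d hd => centralizer_Di _ h0 ha hζ d hd⟩
  constructor
  intro d hd
  rw [Subalgebra.mem_center_iff] at hd
  obtain ⟨c, rfl⟩ := D_center hp hζ ha hb0 h0 hirr d (hd _).symm (hd _).symm
  exact Algebra.mem_bot.2 ⟨c, rfl⟩

end GenusAux

namespace GenusAux

open Polynomial

/-- The condition making `X^p - c` have a root in the cyclic algebra `(a,b)`. -/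
def Solved {F : Type*} [CommRing F] (p : ℕ) (ζ a b c : F) : Prop :=
  (∃ P : F[X], (X ^ p - C a) ∣ P ^ p - C c) ∨
  (∃ (w : F) (Y : F[X]), (X ^ p - C a) ∣ C a * (C (w ^ p) - C b * nrm p ζ Y) - C c)

lemma Solved.map {F G : Type*} [CommRing F] [CommRing G] {p : ℕ} {ζ a b c : F} (f : F →+* G)
    (h : Solved p ζ a b c) : Solved p (f ζ) (f a) (f b) (f c) := by
  rcases h with ⟨P, hP⟩ | ⟨w, Y, h⟩
  · left
    refine ⟨P.map f, ?_⟩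
    simpa using Polynomial.map_dvd f hP
  · right
    refine ⟨f w, Y.map f, ?_⟩
    simpa [nrm_map] using Polynomial.map_dvd f h

lemma twist {F R : Type*} [CommRing F] [Ring R] [Algebra F R] {ξ : F} {x t : R}
    (h : t * x = ξ • (x * t)) (f : F[X]) :
    t * aeval x f = aeval x (f.comp (C ξ * X)) * t := by
  have hk : ∀ n, t * x ^ n = ξ ^ n • (x ^ n * t) := by
    intro n
    induction n with
    | zero => simp
    | succ n ih =>
      rw [pow_succ, ← mul_assoc, ih, smul_mul_assoc, mul_assoc, h, mul_smul_comm, smul_smul,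
        ← mul_assoc, ← pow_succ]
  induction f using Polynomial.induction_on' with
  | add f g hf hg => simp only [map_add, add_comp, mul_add, add_mul, hf, hg]
  | monomial n c =>
    rw [aeval_monomial, monomial_comp, mul_pow, ← C_pow]
    simp only [map_mul, aeval_C, aeval_X, map_pow (aeval x), ← Algebra.smul_def, mul_smul_comm,
      smul_mul_assoc, hk]
    rw [smul_comm]

lemma twist_pow {F R : Type*} [CommRing F] [Ring R] [Algebra F R] {ξ : F} {x t : R}
    (h : t * x = ξ • (x * t)) (f : F[X]) (n : ℕ) :
    (aeval x f * t) ^ n = aeval x (nrm n ξ f) * t ^ n := by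
  induction n with
  | zero => simp [nrm]
  | succ n ih =>
    have h1 : (nrm n ξ f).comp (C ξ * X) * f = nrm (n + 1) ξ f := by
      rw [nrm, nrm, Finset.prod_range_succ', Polynomial.prod_comp]
      congr 1
      · refine Finset.prod_congr rfl (fun k _ => ?_)
        rw [comp_assoc]
        simp [pow_succ, mul_assoc]
      · simp
    rw [pow_succ', ih, ← h1, mul_comm ((nrm n ξ f).comp (C ξ * X)), map_mul, pow_succ']
    rw [mul_assoc, ← mul_assoc t, twist h]
    simp only [mul_assoc]

section emb
variable {F : Type*} [Field F] {p : ℕ} {ζ a b : F}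

lemma aeval_eq_of_dvd {R : Type*} [Ring R] [Algebra F R] {i : R} (hi : i ^ p = algebraMap F R a)
    {Q : F[X]} {c : F} (h : (X ^ p - C a) ∣ Q - C c) : aeval i Q = algebraMap F R c := by
  obtain ⟨S, hS⟩ := h
  have := congrArg (aeval i) hS
  simp only [map_sub, map_mul, map_pow, aeval_X, aeval_C, hi, sub_self, zero_mul] at this
  exact sub_eq_zero.1 this

lemma exists_root_of_solved (hp : p.Prime) (hζ : IsPrimitiveRoot ζ p) {D : Type*} [Ring D]
    [Algebra F D] {i j : D} (hi : i ^ p = algebraMap F D a) (hj : j ^ p = algebraMap F D b)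
    (hji : j * i = ζ • (i * j)) {c : F} (h : Solved p ζ a b c) :
    ∃ u : D, u ^ p = algebraMap F D c := by
  rcases h with ⟨P, hP⟩ | ⟨w, Y, h⟩
  · refine ⟨aeval i P, ?_⟩
    rw [← map_pow]
    exact aeval_eq_of_dvd hi hP
  · have h1 := twist_pow hji Y p
    set j' := aeval i Y * j with hj'
    have hζ0 : ζ ≠ 0 := hζ.ne_zero hp.ne_zero
    have h2 : i * j' = ζ⁻¹ • (j' * i) := by
      have : Commute i (aeval i Y) := by
        have h : X * Y = Y * X := mul_comm _ _
        have := congrArg (aeval i) h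
        rw [map_mul, map_mul, aeval_X] at this
        exact this
      rw [hj', mul_assoc, hji, mul_smul_comm, smul_smul, inv_mul_cancel₀ hζ0, one_smul, ← mul_assoc,
        ← mul_assoc, this.eq]
    have h3 := twist_pow h2 (C w - X) p
    refine ⟨_, h3.trans ?_⟩
    have h4 : nrm p ζ⁻¹ (C w - X) = C (w ^ p) - X ^ p := by
      have h5 := X_pow_sub_C_eq_prod (hζ.inv.map_of_injective (C_injective (R := F))) hp.pos
        (α := (X : F[X])) rfl
      have h6 := congrArg (eval (C w)) h5
      rw [eval_prod] at h6
      simp only [eval_sub, eval_pow, eval_X, eval_C] at h6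
      rw [C_pow, h6, nrm]
      refine Finset.prod_congr rfl (fun k _ => ?_)
      rw [← C_pow]
      simp
    rw [h4, hi, map_sub, map_pow (aeval j'), aeval_X, aeval_C, h1, hj]
    have h5 := aeval_eq_of_dvd hi h
    rw [← h5]
    simp only [map_mul, map_sub, aeval_C]
    rw [← Algebra.commutes, ← Algebra.commutes (A := D) b]

lemma isN_of_iso (hp : p.Prime) (hζ : IsPrimitiveRoot ζ p) (ha : a ≠ 0) {b₁ b₂ : F}
    (hb₁ : b₁ ≠ 0) (hb₂ : b₂ ≠ 0) (hirr : Irreducible (X ^ p - C a : F[X]))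
    {D : Type*} [DivisionRing D]
    [Algebra F D] [FiniteDimensional F D] {i j i' j' : D} (hi : i ^ p = algebraMap F D a)
    (hj : j ^ p = algebraMap F D b₂)
    (hji : j * i = ζ • (i * j)) (hi' : i' ^ p = algebraMap F D a) (hj' : j' ^ p = algebraMap F D b₁)
    (hji' : j' * i' = ζ • (i' * j'))
    (hc : ∀ d, d * i = i * d → ∃ P : F[X], d = aeval i P) : IsN p ζ a (b₁ / b₂) := by
  have hζ0 : ζ ≠ 0 := hζ.ne_zero hp.ne_zero
  have ne0 : ∀ {x : D} {c : F}, c ≠ 0 → x ^ p = algebraMap F D c → x ≠ 0 := by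
    rintro x c hc h rfl
    rw [zero_pow hp.ne_zero] at h
    exact hc ((algebraMap F D).injective (by rw [← h, map_zero]))
  have i0 : i ≠ 0 := ne0 ha hi
  have j0 : j ≠ 0 := ne0 hb₂ hj
  have i0' : i' ≠ 0 := ne0 ha hi'
  let T : Module.End F D := LinearMap.mulLeft F i * LinearMap.mulRight F i'⁻¹
  have hT : T ^ p = 1 := by
    have hcomm : Commute (LinearMap.mulLeft F i) (LinearMap.mulRight F i'⁻¹) := by
      ext x; simp [mul_assoc]
    rw [hcomm.mul_pow, LinearMap.pow_mulLeft, LinearMap.pow_mulRight, inv_pow, hi, hi']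
    ext x
    simp only [Module.End.mul_apply, LinearMap.mulLeft_apply, LinearMap.mulRight_apply,
      Module.End.one_apply]
    rw [← mul_assoc, Algebra.commutes, mul_assoc, mul_inv_cancel₀, mul_one]
    simpa using ha
  obtain ⟨k, x, hx0, hx⟩ : ∃ (k : ℕ) (x : D), x ≠ 0 ∧ i * x = ζ ^ k • (x * i') := by
    have hdvd : minpoly F T ∣ X ^ p - C 1 := minpoly.dvd _ _ (by simp [hT])
    have hint : IsIntegral F T := Algebra.IsIntegral.isIntegral T
    have hs : (minpoly F T).Splits := by
      refine Polynomial.Splits.of_dvd (X_pow_sub_one_splits hζ) ?_ hdvd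
      exact X_pow_sub_C_ne_zero hp.pos 1
    obtain ⟨μ, hμ⟩ := hs.exists_eval_eq_zero (minpoly.degree_pos hint).ne'
    have hμp : μ ^ p = 1 := by
      obtain ⟨S, hS⟩ := hdvd
      have := congrArg (eval μ) hS
      rw [eval_mul, hμ, zero_mul] at this
      simpa [sub_eq_zero] using this
    have : NeZero p := ⟨hp.ne_zero⟩
    obtain ⟨k, _, rfl⟩ := hζ.eq_pow_of_pow_eq_one hμp
    obtain ⟨x, hx⟩ := (Module.End.hasEigenvalue_of_isRoot hμ).exists_hasEigenvector
    refine ⟨k, x, hx.2, ?_⟩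
    have := hx.apply_eq_smul
    change i * (x * i'⁻¹) = _ at this
    rw [← smul_mul_assoc, ← this, mul_assoc, mul_assoc, inv_mul_cancel₀ i0', mul_one]
  have hjk : ∀ k, j ^ k * i = ζ ^ k • (i * j ^ k) := by
    intro k
    induction k with
    | zero => simp
    | succ n ih =>
      rw [pow_succ', mul_assoc, ih, mul_smul_comm, ← mul_assoc, hji, smul_mul_assoc, smul_smul,
        mul_assoc, ← pow_succ]
  set y := j ^ k * x with hy
  have y0 : y ≠ 0 := mul_ne_zero (pow_ne_zero _ j0) hx0
  have hiy : i * y = y * i' := by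
    have h1 : ζ ^ k • (i * y) = ζ ^ k • (y * i') := by
      rw [hy, ← mul_assoc, ← smul_mul_assoc, ← hjk, mul_assoc, hx, mul_smul_comm, mul_assoc]
    exact smul_right_injective _ (pow_ne_zero k hζ0) h1
  have hyi : y⁻¹ * i = i' * y⁻¹ := by
    rw [eq_mul_inv_iff_mul_eq₀ y0, mul_assoc, hiy, ← mul_assoc, inv_mul_cancel₀ y0, one_mul]
  set j'' := y * j' * y⁻¹ with hj''
  have h1 : j'' * i = ζ • (i * j'') := by
    rw [hj'', mul_assoc, hyi, mul_assoc, ← mul_assoc j', hji', smul_mul_assoc, mul_smul_comm,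
      ← mul_assoc, ← mul_assoc, ← mul_assoc, ← mul_assoc, hiy]
  have h2 : j⁻¹ * i = ζ⁻¹ • (i * j⁻¹) := by
    have : i * j⁻¹ = ζ • (j⁻¹ * i) := by
      rw [mul_inv_eq_iff_eq_mul₀ j0, smul_mul_assoc, mul_assoc, ← mul_smul_comm, ← hji, ← mul_assoc,
        inv_mul_cancel₀ j0, one_mul]
    rw [this, smul_smul, inv_mul_cancel₀ hζ0, one_smul]
  obtain ⟨P, hP⟩ := hc (j'' * j⁻¹) (by
    rw [mul_assoc, h2, mul_smul_comm, ← mul_assoc, h1, smul_mul_assoc, smul_smul,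
      inv_mul_cancel₀ hζ0, one_smul, mul_assoc])
  have h3 : j'' = aeval i P * j := by rw [← hP, mul_assoc, inv_mul_cancel₀ j0, mul_one]
  have hconj : (y * j' * y⁻¹) ^ p = y * j' ^ p * y⁻¹ := by
    have := GroupWithZero.conj_pow₀ (s := p) (d := j') (inv_ne_zero y0)
    rwa [inv_inv] at this
  have h4 : j'' ^ p = algebraMap F D b₁ := by
    rw [hj'', hconj, hj', ← Algebra.commutes, mul_assoc, mul_inv_cancel₀ y0, mul_one]
  rw [h3, twist_pow hji, hj] at h4
  refine ⟨P, ?_⟩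
  rw [minpoly.eq_of_irreducible_of_monic hirr (x := i) (by simp [hi]) (monic_XpC hp.ne_zero)]
  apply minpoly.dvd
  rw [map_sub, aeval_C, sub_eq_zero, map_div₀, eq_div_iff (by simpa using hb₂), h4]

end emb

end GenusAux

namespace GenusAux

open Polynomial

/-- The norm of a cyclic action. -/
def Nm {R : Type*} [CommRing R] (p : ℕ) (σ : R →+* R) (x : R) : R := ∏ k ∈ Finset.range p, σ^[k] x

section Nm
variable {R : Type*} [CommRing R] {p : ℕ} {σ : R →+* R}

lemma Nm_mul (x y : R) : Nm p σ (x * y) = Nm p σ x * Nm p σ y := by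
  rw [Nm, Nm, Nm, ← Finset.prod_mul_distrib]
  exact Finset.prod_congr rfl (fun k _ => iterate_map_mul σ k x y)

lemma Nm_one : Nm p σ 1 = 1 := by
  rw [Nm]
  exact Finset.prod_eq_one (fun k _ => iterate_map_one σ k)

lemma Nm_map {R' : Type*} [CommRing R'] {σ' : R' →+* R'} (f : R →+* R')
    (h : ∀ x, f (σ x) = σ' (f x)) (x : R) : f (Nm p σ x) = Nm p σ' (f x) := by
  rw [Nm, Nm, map_prod]
  refine Finset.prod_congr rfl (fun k hk => ?_)
  clear hk
  induction k with
  | zero => rfl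
  | succ k ih => rw [Function.iterate_succ_apply', Function.iterate_succ_apply', h, ih]

lemma Nm_fix {x : R} (h : σ x = x) : Nm p σ x = x ^ p := by
  rw [Nm, Finset.prod_congr rfl (fun k _ => Function.iterate_fixed h k)]
  simp

lemma Nm_sigma (hσ : ∀ x, σ^[p] x = x) (x : R) : Nm p σ (σ x) = Nm p σ x := by
  rw [Nm, Nm]
  cases p with
  | zero => simp
  | succ n =>
    rw [Finset.prod_range_succ, Finset.prod_range_succ']
    simp only [← Function.iterate_succ_apply]
    rw [hσ]
    rfl

lemma Nm_iter (hσ : ∀ x, σ^[p] x = x) (k : ℕ) (x : R) : Nm p σ (σ^[k] x) = Nm p σ x := by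
  induction k with
  | zero => rfl
  | succ k ih => rw [Function.iterate_succ_apply', Nm_sigma hσ, ih]

lemma dvd_Nm (hp : p ≠ 0) (x : R) : x ∣ Nm p σ x :=
  Finset.dvd_prod_of_mem (fun k => σ^[k] x) (Finset.mem_range.2 (Nat.pos_of_ne_zero hp))

lemma sigma_inj (hp : p ≠ 0) (hσ : ∀ x, σ^[p] x = x) : Function.Injective σ := by
  intro x y h
  rw [← hσ x, ← hσ y]
  obtain ⟨n, rfl⟩ := Nat.exists_eq_succ_of_ne_zero hp
  rw [Function.iterate_succ_apply, Function.iterate_succ_apply, h]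

lemma isUnit_Nm {x : R} (hx : IsUnit x) : IsUnit (Nm p σ x) := by
  obtain ⟨y, hy⟩ := hx.exists_right_inv
  exact IsUnit.of_mul_eq_one (Nm p σ y) (by rw [← Nm_mul, hy, Nm_one])

lemma Nm_ne_zero [IsDomain R] (hp : p ≠ 0) (hσ : ∀ x, σ^[p] x = x) {x : R} (hx : x ≠ 0) :
    Nm p σ x ≠ 0 := by
  rw [Nm, Finset.prod_ne_zero_iff]
  intro k _ h
  have : Function.Injective (σ^[k]) := (sigma_inj hp hσ).iterate k
  exact hx (this (by rw [h, iterate_map_zero]))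

lemma unit_norm [IsDomain R] [UniqueFactorizationMonoid R] (hp : p ≠ 0) (hσ : ∀ x, σ^[p] x = x)
    {e : R} (he : IsUnit e) (Q : R) : ∀ P : R, Q ≠ 0 → e * Nm p σ Q = Nm p σ P →
      ∃ u, IsUnit u ∧ e = Nm p σ u := by
  induction Q using UniqueFactorizationMonoid.induction_on_prime with
  | h₁ => exact fun P h => absurd rfl h
  | h₂ x hx =>
    intro P _ h
    obtain ⟨y, hy⟩ := hx.exists_right_inv
    have hP : IsUnit P := isUnit_of_dvd_unit (dvd_Nm hp P) (by
      rw [← h]; exact he.mul (isUnit_Nm hx))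
    have hy' : IsUnit y := IsUnit.of_mul_eq_one x (by rw [mul_comm, hy])
    refine ⟨P * y, hP.mul hy', ?_⟩
    rw [Nm_mul, ← h, mul_assoc, ← Nm_mul, hy, Nm_one, mul_one]
  | h₃ q π hq hπ ih =>
    intro P _ h
    have h1 : π ∣ Nm p σ P := by
      rw [← h, Nm_mul]
      exact ((dvd_Nm hp π).mul_right _).mul_left _
    rw [Nm, hπ.dvd_finsetProd_iff] at h1
    obtain ⟨k, hk, c, hc⟩ := h1
    rw [Finset.mem_range] at hk
    have h2 : P = σ^[p - k] π * σ^[p - k] c := by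
      rw [← iterate_map_mul, ← hc, ← Function.iterate_add_apply, Nat.sub_add_cancel hk.le, hσ]
    refine ih (σ^[p - k] c) hq ?_
    rw [h2, Nm_mul, Nm_mul, Nm_iter hσ, ← mul_assoc, mul_comm e, mul_assoc] at h
    exact mul_left_cancel₀ (Nm_ne_zero hp hσ hπ.ne_zero) h

end Nm

lemma dvd_closure_primes {A : Type*} [CommRing A] [IsDomain A] [UniqueFactorizationMonoid A]
    {s : Set A} (hs : ∀ x ∈ s, Prime x) {y : A} (hy : y ∈ Submonoid.closure s) :
    ∀ α, α ∣ y → ∃ v ∈ Submonoid.closure s, ∃ c, IsUnit c ∧ α = c * v := by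
  induction hy using Submonoid.closure_induction with
  | mem x hx =>
    intro α hα
    rcases (hs x hx).irreducible.dvd_iff.1 hα with h | h
    · exact ⟨1, one_mem _, α, h, by simp⟩
    · obtain ⟨c, hc⟩ := h
      exact ⟨x, Submonoid.subset_closure hx, c, c.isUnit, by rw [← hc, mul_comm]⟩
  | one => exact fun α hα => ⟨1, one_mem _, α, isUnit_of_dvd_one hα, by simp⟩
  | mul x y _ _ hx hy =>
    intro α hα
    obtain ⟨α₁, α₂, h1, h2, rfl⟩ := exists_dvd_and_dvd_of_dvd_mul hα
    obtain ⟨v, hv, c, hc, rfl⟩ := hx _ h1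
    obtain ⟨v', hv', c', hc', rfl⟩ := hy _ h2
    exact ⟨v * v', mul_mem hv hv', c * c', hc.mul hc', by ring⟩

end GenusAux

namespace GenusAux

open Polynomial

section plus
variable {M : Type u} [Field M] (p : ℕ) [Fact p.Prime] (τ : M →+* M) {T : Type u} (γ b : T → M)

/-- The polynomial ring. -/
abbrev PA (M : Type u) [Field M] (p : ℕ) (T : Type u) := MvPolynomial (T × ZMod p) M

/-- The elements `β_t`. -/
noncomputable def beta (t : T) : PA M p T :=
  MvPolynomial.C (b t)⁻¹ * (MvPolynomial.X (t, 0) ^ p - MvPolynomial.C (γ t))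

/-- The primes inverted. -/
def S0 : Set (PA M p T) := {x | ∃ t k, k ≠ 0 ∧ x = MvPolynomial.X (t, k)} ∪ Set.range (beta p γ b)

/-- The localization. -/
abbrev PR := Localization (Submonoid.closure (S0 p γ b))

/-- The structure map. -/
noncomputable abbrev iR : PA M p T →+* PR p γ b := algebraMap _ _

lemma beta_unit (t : T) : IsUnit (iR p γ b (beta p γ b t)) :=
  IsLocalization.map_units (M := Submonoid.closure (S0 p γ b)) (PR p γ b)
    ⟨_, Submonoid.subset_closure (Or.inr ⟨t, rfl⟩)⟩

lemma X_unit (t : T) {k : ZMod p} (hk : k ≠ 0) : IsUnit (iR p γ b (MvPolynomial.X (t, k))) :=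
  IsLocalization.map_units (M := Submonoid.closure (S0 p γ b)) (PR p γ b)
    ⟨_, Submonoid.subset_closure (Or.inl ⟨t, k, hk, rfl⟩)⟩

/-- The elements `z_{t,k}`. -/
noncomputable def zh (t : T) (k : ZMod p) : PR p γ b :=
  if k = 0 then iR p γ b (beta p γ b t) * 
    Ring.inverse (∏ k ∈ Finset.univ.erase 0, iR p γ b (MvPolynomial.X (t, k)))
  else iR p γ b (MvPolynomial.X (t, k))

lemma zh_of_ne (t : T) {k : ZMod p} (hk : k ≠ 0) :
    zh p γ b t k = iR p γ b (MvPolynomial.X (t, k)) := if_neg hk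

lemma prod_unit (t : T) :
    IsUnit (∏ k ∈ Finset.univ.erase 0, iR p γ b (MvPolynomial.X (t, k))) := by
  rw [IsUnit.prod_iff]
  intro k hk
  exact X_unit p γ b t (Finset.ne_of_mem_erase hk)

lemma prod_zh (t : T) : ∏ k, zh p γ b t k = iR p γ b (beta p γ b t) := by
  rw [← Finset.mul_prod_erase _ _ (Finset.mem_univ 0)]
  rw [Finset.prod_congr rfl (fun k hk => zh_of_ne p γ b t (Finset.ne_of_mem_erase hk))]
  rw [zh, if_pos rfl, mul_assoc, Ring.inverse_mul_cancel _ (prod_unit p γ b t), mul_one]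

lemma zh_unit (t : T) (k : ZMod p) : IsUnit (zh p γ b t k) := by
  refine isUnit_of_dvd_unit (Finset.dvd_prod_of_mem _ (Finset.mem_univ k)) (y := ∏ k, zh p γ b t k) ?_
  rw [prod_zh]
  exact beta_unit p γ b t

/-- The semilinear action on the polynomial ring. -/
noncomputable def sig0 : PA M p T →+* PR p γ b :=
  MvPolynomial.eval₂Hom ((iR p γ b).comp (MvPolynomial.C.comp τ))
    (fun tk => if tk.2 = 0 then iR p γ b (MvPolynomial.X tk) else zh p γ b tk.1 (tk.2 + 1))

lemma sig0_C (m : M) : sig0 p τ γ b (MvPolynomial.C m) = iR p γ b (MvPolynomial.C (τ m)) := by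
  rw [sig0, MvPolynomial.eval₂Hom_C]; rfl

lemma sig0_X0 (t : T) : sig0 p τ γ b (MvPolynomial.X (t, 0)) = iR p γ b (MvPolynomial.X (t, 0)) := by
  rw [sig0, MvPolynomial.eval₂Hom_X', if_pos rfl]

lemma sig0_X (t : T) {k : ZMod p} (hk : k ≠ 0) :
    sig0 p τ γ b (MvPolynomial.X (t, k)) = zh p γ b t (k + 1) := by
  rw [sig0, MvPolynomial.eval₂Hom_X', if_neg hk]

variable (hγ : ∀ t, τ (γ t) = γ t) (hb : ∀ t, τ (b t) = b t)

include hγ hb in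
lemma sig0_beta (t : T) : sig0 p τ γ b (beta p γ b t) = iR p γ b (beta p γ b t) := by
  rw [beta]
  simp only [map_mul, map_sub, map_pow, sig0_C, sig0_X0, map_inv₀ τ, hγ, hb]

include hγ hb in
lemma sig0_unit (y : Submonoid.closure (S0 p γ b)) : IsUnit (sig0 p τ γ b y) := by
  obtain ⟨y, hy⟩ := y
  induction hy using Submonoid.closure_induction with
  | mem x hx =>
    rcases hx with ⟨t, k, hk, rfl⟩ | ⟨t, rfl⟩
    · change IsUnit (sig0 p τ γ b (MvPolynomial.X (t, k)))
      rw [sig0_X p τ γ b t hk]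
      exact zh_unit p γ b t _
    · change IsUnit (sig0 p τ γ b (beta p γ b t))
      rw [sig0_beta p τ γ b hγ hb]
      exact beta_unit p γ b t
  | one => 
    change IsUnit (sig0 p τ γ b 1)
    rw [map_one]; exact isUnit_one
  | mul x y _ _ hx hy => 
    change IsUnit (sig0 p τ γ b (x * y))
    rw [map_mul]; exact hx.mul hy

/-- The semilinear action. -/
noncomputable def sig : PR p γ b →+* PR p γ b :=
  IsLocalization.lift (M := Submonoid.closure (S0 p γ b)) (sig0_unit p τ γ b hγ hb)

lemma sig_iR (x : PA M p T) : sig p τ γ b hγ hb (iR p γ b x) = sig0 p τ γ b x :=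
  IsLocalization.lift_eq _ _

lemma sig_zh (t : T) (k : ZMod p) : sig p τ γ b hγ hb (zh p γ b t k) = zh p γ b t (k + 1) := by
  by_cases hk : k = 0
  swap
  · rw [zh_of_ne p γ b t hk, sig_iR, sig0_X p τ γ b t hk]
  subst hk
  have h1 := congrArg (sig p τ γ b hγ hb) (prod_zh p γ b t)
  rw [sig_iR, sig0_beta p τ γ b hγ hb, ← prod_zh, map_prod,
    ← Equiv.prod_comp (Equiv.addRight (1 : ZMod p)) (fun k => zh p γ b t k),
    ← Finset.mul_prod_erase _ _ (Finset.mem_univ 0), 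
    ← Finset.mul_prod_erase _ _ (Finset.mem_univ (0 : ZMod p))] at h1
  rw [Finset.prod_congr rfl (g := fun k => zh p γ b t (k + 1)) (fun k hk => by
    rw [zh_of_ne p γ b t (Finset.ne_of_mem_erase hk), sig_iR,
      sig0_X p τ γ b t (Finset.ne_of_mem_erase hk)])] at h1
  refine IsUnit.mul_right_cancel ?_ h1
  rw [IsUnit.prod_iff]
  exact fun k _ => zh_unit p γ b t _

lemma sig_iter_zh (t : T) (n : ℕ) (k : ZMod p) :
    (sig p τ γ b hγ hb)^[n] (zh p γ b t k) = zh p γ b t (k + n) := by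
  induction n with
  | zero => simp
  | succ n ih => rw [Function.iterate_succ_apply', ih, sig_zh]; push_cast; rw [add_assoc]

lemma sig_p (hτ : ∀ m, τ^[p] m = m) (x : PR p γ b) : (sig p τ γ b hγ hb)^[p] x = x := by
  have hC : ∀ n m, (sig p τ γ b hγ hb)^[n] (iR p γ b (MvPolynomial.C m)) =
      iR p γ b (MvPolynomial.C (τ^[n] m)) := by
    intro n m
    induction n with
    | zero => rfl
    | succ n ih => rw [Function.iterate_succ_apply', ih, sig_iR, sig0_C, Function.iterate_succ_apply']
  have h : (sig p τ γ b hγ hb) ^ p = RingHom.id _ := by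
    apply IsLocalization.ringHom_ext (Submonoid.closure (S0 p γ b))
    apply MvPolynomial.ringHom_ext
    · intro m
      simp only [RingHom.comp_apply, RingHom.coe_pow, RingHom.id_apply]
      rw [hC, hτ]
    · rintro ⟨t, k⟩
      simp only [RingHom.comp_apply, RingHom.coe_pow, RingHom.id_apply]
      by_cases hk : k = 0
      · subst hk
        exact Function.iterate_fixed (by rw [sig_iR, sig0_X0]) _
      · rw [← zh_of_ne p γ b t hk, sig_iter_zh]
        simp
  have := congrArg (fun f : PR p γ b →+* PR p γ b => f x) h
  simpa [RingHom.coe_pow] using this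

lemma Nm_zh (hτ : ∀ m, τ^[p] m = m) (t : T) (k : ZMod p) :
    Nm p (sig p τ γ b hγ hb) (zh p γ b t k) = iR p γ b (beta p γ b t) := by
  have hp : p.Prime := Fact.out
  have h1 : zh p γ b t k = (sig p τ γ b hγ hb)^[k.val] (zh p γ b t 0) := by
    rw [sig_iter_zh]; simp
  rw [h1, Nm_iter (sig_p p τ γ b hγ hb hτ), ← prod_zh, Nm]
  simp only [sig_iter_zh, zero_add]
  refine Finset.prod_bij (fun n _ => (n : ZMod p)) (fun _ _ => Finset.mem_univ _) ?_ ?_ 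
    (fun _ _ => rfl)
  · intro n hn m hm h
    rw [ZMod.natCast_eq_natCast_iff'] at h
    rw [Finset.mem_range] at hn hm
    rwa [Nat.mod_eq_of_lt hn, Nat.mod_eq_of_lt hm] at h
  · intro k _
    exact ⟨k.val, Finset.mem_range.2 (ZMod.val_lt k), by simp⟩

end plus

end GenusAux

namespace GenusAux

open Polynomial

section plus
variable {M : Type u} [Field M] (p : ℕ) [Fact p.Prime] (τ : M →+* M) {T : Type u} (γ b : T → M)

lemma prime_beta (hb0 : ∀ t, b t ≠ 0) (hirr : ∀ t m, m ^ p ≠ γ t) (t : T) :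
    Prime (beta p γ b t) := by
  have hp : p.Prime := Fact.out
  have h1 : Prime (X ^ p - C (γ t) : M[X]) :=
    (X_pow_sub_C_irreducible_of_prime hp (hirr t)).prime
  let s : Set (T × ZMod p) := {(t, 0)}
  have : Unique s := Set.uniqueSingleton _
  have h2 : Prime ((MvPolynomial.X (⟨(t, 0), rfl⟩ : s)) ^ p - MvPolynomial.C (γ t) : MvPolynomial s M) := by
    rw [← MulEquiv.prime_iff (MvPolynomial.uniqueAlgEquiv M s)]
    convert h1
    simp
  have h3 := (MvPolynomial.prime_rename_iff s).2 h2
  have hu : IsUnit (MvPolynomial.C (b t)⁻¹ : PA M p T) := 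
    (IsUnit.mk0 _ (inv_ne_zero (hb0 t))).map _
  refine ((associated_unit_mul_left _ _ hu).prime_iff).2 ?_
  rw [map_sub, map_pow, MvPolynomial.rename_X, MvPolynomial.rename_C] at h3
  exact h3

variable (hb0 : ∀ t, b t ≠ 0) (hirr : ∀ t m, m ^ p ≠ γ t)
include hb0 hirr

lemma S0_prime (x : PA M p T) (hx : x ∈ S0 p γ b) : Prime x := by
  rcases hx with ⟨t, k, hk, rfl⟩ | ⟨t, rfl⟩
  · exact MvPolynomial.X_prime
  · exact prime_beta p γ b hb0 hirr t

lemma S0_nzd : Submonoid.closure (S0 p γ b) ≤ nonZeroDivisors (PA M p T) := by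
  rw [Submonoid.closure_le]
  intro x hx
  exact mem_nonZeroDivisors_of_ne_zero (S0_prime p γ b hb0 hirr x hx).ne_zero

lemma PR_domain : IsDomain (PR p γ b) :=
  IsLocalization.isDomain_localization (S0_nzd p γ b hb0 hirr)

lemma iR_inj : Function.Injective (iR p γ b) :=
  IsLocalization.injective (PR p γ b) (S0_nzd p γ b hb0 hirr)

omit hb0 hirr in
lemma PR_ufd : UniqueFactorizationMonoid (PR p γ b) :=
  UniqueFactorizationMonoid.of_isLocalization (Submonoid.closure (S0 p γ b)) _

/-- Evaluation at all variables but one. -/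
noncomputable def ev0 (t : T) : PA M p T →+* M[X] :=
  open Classical in
  MvPolynomial.eval₂Hom C (fun tk => if tk = (t, 0) then X else 0)

omit hb0 hirr in
lemma ev0_C (t : T) (m : M) : ev0 p t (MvPolynomial.C m) = C m := by
  rw [ev0, MvPolynomial.eval₂Hom_C]

lemma ev0_beta_ne (t s : T) : ev0 p t (beta p γ b s) ≠ 0 := by
  have hp : p.Prime := Fact.out
  rw [beta, map_mul, ev0_C, map_sub, map_pow, ev0_C]
  refine mul_ne_zero (C_ne_zero.2 (inv_ne_zero (hb0 s))) ?_
  rw [ev0, MvPolynomial.eval₂Hom_X']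
  split_ifs
  · exact X_pow_sub_C_ne_zero hp.pos _
  · rw [zero_pow hp.ne_zero, zero_sub, neg_ne_zero, C_ne_zero]
    intro h
    exact hirr s 0 (by rw [h, zero_pow hp.ne_zero])

open Classical in
lemma ev0_beta_deg (t s : T) : (ev0 p t (beta p γ b s)).natDegree = if s = t then p else 0 := by
  have hp : p.Prime := Fact.out
  rw [beta, map_mul, ev0_C, map_sub, map_pow, ev0_C,
    natDegree_C_mul (inv_ne_zero (hb0 s)), ev0, MvPolynomial.eval₂Hom_X']
  by_cases h : s = t
  · subst h
    rw [if_pos rfl, if_pos rfl, natDegree_X_pow_sub_C]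
  · rw [if_neg h, if_neg (by simp [h]), zero_pow hp.ne_zero, zero_sub, natDegree_neg, natDegree_C]

open Classical in
lemma betas_deg (t : T) (k : T →₀ ℕ) :
    (ev0 p t (k.prod fun s n => beta p γ b s ^ n)).natDegree = p * k t := by
  rw [Finsupp.prod, map_prod, natDegree_prod]
  swap
  · intro i _
    rw [map_pow]
    exact pow_ne_zero _ (ev0_beta_ne p γ b hb0 hirr t i)
  simp only [map_pow, natDegree_pow, ev0_beta_deg p γ b hb0 hirr]
  simp only [mul_ite, mul_zero, Finset.sum_ite_eq', Finsupp.mem_support_iff]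
  split_ifs with h
  · rw [mul_comm]
  · rw [not_not.1 h, mul_zero]

lemma betas_cancel {e n : M} (he : e ≠ 0) (hn : n ≠ 0) {B₁ B₂ : PA M p T}
    (h1 : B₁ ∈ Submonoid.closure (Set.range (beta p γ b)))
    (h2 : B₂ ∈ Submonoid.closure (Set.range (beta p γ b)))
    (h : MvPolynomial.C e * B₁ = MvPolynomial.C n * B₂) : e = n := by
  have hp : p.Prime := Fact.out
  obtain ⟨k₁, hk₁⟩ := Submonoid.exists_finsupp_of_mem_closure_range _ _ h1
  obtain ⟨k₂, hk₂⟩ := Submonoid.exists_finsupp_of_mem_closure_range _ _ h2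
  have hk : k₁ = k₂ := by
    ext t
    have h3 := congrArg (fun x => (ev0 p t x).natDegree) h
    simp only [map_mul, ev0_C, natDegree_C_mul he, natDegree_C_mul hn, hk₁, hk₂] at h3
    rw [betas_deg p γ b hb0 hirr, betas_deg p γ b hb0 hirr] at h3
    exact Nat.eq_of_mul_eq_mul_left hp.pos h3
  subst hk
  rw [← hk₂] at hk₁
  subst hk₁
  have h0 : B₁ ≠ 0 := by
    rw [hk₂, Finsupp.prod, Finset.prod_ne_zero_iff]
    exact fun i _ => pow_ne_zero _ (prime_beta p γ b hb0 hirr i).ne_zero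
  exact MvPolynomial.C_injective _ _ (mul_right_cancel₀ h0 h)

variable (hγ : ∀ t, τ (γ t) = γ t) (hb : ∀ t, τ (b t) = b t)

omit hb0 hirr in
lemma Nm_S0 (hτ : ∀ m, τ^[p] m = m) (s : PA M p T) (hs : s ∈ Submonoid.closure (S0 p γ b)) :
    ∃ B ∈ Submonoid.closure (Set.range (beta p γ b)),
      Nm p (sig p τ γ b hγ hb) (iR p γ b s) = iR p γ b B := by
  induction hs using Submonoid.closure_induction with
  | mem x hx =>
    rcases hx with ⟨t, k, hk, rfl⟩ | ⟨t, rfl⟩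
    · refine ⟨beta p γ b t, Submonoid.subset_closure ⟨t, rfl⟩, ?_⟩
      rw [← zh_of_ne p γ b t hk, Nm_zh p τ γ b hγ hb hτ]
    · refine ⟨beta p γ b t ^ p, pow_mem (Submonoid.subset_closure (Set.mem_range_self t)) p, ?_⟩
      rw [Nm_fix (by rw [sig_iR, sig0_beta p τ γ b hγ hb]), map_pow]
  | one => exact ⟨1, one_mem _, by rw [map_one, Nm_one]⟩
  | mul x y _ _ hx hy =>
    obtain ⟨B, hB, h⟩ := hx
    obtain ⟨B', hB', h'⟩ := hy
    exact ⟨B * B', mul_mem hB hB', by rw [map_mul, Nm_mul, h, h', map_mul]⟩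

lemma plus_unit (hτ : ∀ m, τ^[p] m = m) {e : M} (he : e ≠ 0) {u : PR p γ b} (hu : IsUnit u)
    (h : iR p γ b (MvPolynomial.C e) = Nm p (sig p τ γ b hγ hb) u) : ∃ m, Nm p τ m = e := by
  have hp : p.Prime := Fact.out
  have hinj := iR_inj p γ b hb0 hirr
  obtain ⟨α, s, rfl⟩ := IsLocalization.exists_mk'_eq (Submonoid.closure (S0 p γ b)) u
  obtain ⟨w, hw⟩ := hu.exists_right_inv
  obtain ⟨α', s', rfl⟩ := IsLocalization.exists_mk'_eq (Submonoid.closure (S0 p γ b)) w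
  have hα : α ∣ (s * s' : Submonoid.closure (S0 p γ b)) := by
    refine ⟨α', ?_⟩
    apply hinj
    rw [← IsLocalization.mk'_mul, IsLocalization.mk'_eq_iff_eq_mul, one_mul] at hw
    exact hw.symm
  obtain ⟨v, hv, c, hc, rfl⟩ := dvd_closure_primes (S0_prime p γ b hb0 hirr) (s * s').2 α hα
  obtain ⟨m, hm, rfl⟩ := MvPolynomial.isUnit_iff_eq_C_of_isReduced.1 hc
  have hspec := IsLocalization.mk'_spec (PR p γ b) (MvPolynomial.C m * v) s
  have h2 := congrArg (Nm p (sig p τ γ b hγ hb)) hspec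
  obtain ⟨B₁, hB₁, h3⟩ := Nm_S0 p τ γ b hγ hb hτ s s.2
  obtain ⟨B₂, hB₂, h4⟩ := Nm_S0 p τ γ b hγ hb hτ v hv
  have h5 : Nm p (sig p τ γ b hγ hb) (iR p γ b (MvPolynomial.C m)) = 
      iR p γ b (MvPolynomial.C (Nm p τ m)) := 
    (Nm_map (σ := τ) ((iR p γ b).comp MvPolynomial.C) (fun x => by
      change _ = sig p τ γ b hγ hb (iR p γ b (MvPolynomial.C x)) 
      rw [sig_iR, sig0_C]; rfl) m).symm
  rw [Nm_mul, ← h, map_mul, Nm_mul, h4, h5, h3, ← map_mul, ← map_mul] at h2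
  refine ⟨m, (betas_cancel p γ b hb0 hirr he ?_ hB₁ hB₂ (hinj h2)).symm⟩
  exact Nm_ne_zero hp.ne_zero hτ hm.ne_zero

end plus

lemma plus_abs {M : Type u} [CommRing M] (hM : IsField M) {p : ℕ} (hp : p.Prime) (τ : M →+* M)
    {T : Type u} (γ b : T → M) (hτ : ∀ m, τ^[p] m = m)
    (hγ : ∀ t, τ (γ t) = γ t) (hb : ∀ t, τ (b t) = b t)
    (hb0 : ∀ t, b t ≠ 0) (hirr : ∀ t m, m ^ p ≠ γ t) :
    ∃ (L : Type u) (_ : Field L) (f : M →+* L) (σ : L →+* L), (∀ m, σ (f m) = f (τ m)) ∧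
      (∀ x, σ^[p] x = x) ∧ (∀ t, ∃ w z, σ w = w ∧ w ^ p - f (γ t) = f (b t) * Nm p σ z) ∧
      (∀ e, e ≠ 0 → (∃ x, Nm p σ x = f e) → ∃ m, Nm p τ m = e) := by
  have : Fact p.Prime := ⟨hp⟩
  letI : Field M := hM.toField
  have := PR_domain p γ b hb0 hirr
  have := PR_ufd p γ b
  have hσ := sig_p p τ γ b hγ hb hτ
  have hinj := sigma_inj hp.ne_zero hσ
  set σ₀ := sig p τ γ b hγ hb with hσ₀
  let σ : FractionRing (PR p γ b) →+* FractionRing (PR p γ b) := IsFractionRing.map hinj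
  let j : PR p γ b →+* FractionRing (PR p γ b) := algebraMap _ _
  have hj : Function.Injective j := IsFractionRing.injective _ _
  have hσj : ∀ x, σ (j x) = j (σ₀ x) := fun x => IsLocalization.map_eq _ _
  have hσjk : ∀ k x, σ^[k] (j x) = j (σ₀^[k] x) := by
    intro k x
    induction k with
    | zero => rfl
    | succ k ih => rw [Function.iterate_succ_apply', Function.iterate_succ_apply', ih, hσj]
  have hNj : ∀ x, j (Nm p σ₀ x) = Nm p σ (j x) := fun x => Nm_map j (fun x => (hσj x).symm) x
  refine ⟨FractionRing (PR p γ b), inferInstance, j.comp ((iR p γ b).comp MvPolynomial.C), σ,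
    ?_, ?_, ?_, ?_⟩
  · intro m
    change σ (j (iR p γ b (MvPolynomial.C m))) = j (iR p γ b (MvPolynomial.C (τ m)))
    rw [hσj, hσ₀, sig_iR, sig0_C]
  · intro x
    have h : σ ^ p = RingHom.id _ := by
      apply IsFractionRing.ringHom_ext (A := PR p γ b)
      intro x
      change (σ ^ p) (j x) = j x
      rw [RingHom.coe_pow, hσjk, hσ]
    have := congrArg (fun f : _ →+* _ => f x) h
    simpa [RingHom.coe_pow] using this
  · intro t
    refine ⟨j (iR p γ b (MvPolynomial.X (t, 0))), j (zh p γ b t 0), ?_, ?_⟩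
    · rw [hσj, hσ₀, sig_iR, sig0_X0]
    · rw [← hNj, Nm_zh p τ γ b hγ hb hτ]
      change _ - j (iR p γ b (MvPolynomial.C (γ t))) = j (iR p γ b (MvPolynomial.C (b t))) * _
      rw [← map_pow, ← map_sub, ← map_pow, ← map_sub, ← map_mul, ← map_mul, beta, ← mul_assoc,
        ← map_mul MvPolynomial.C]
      rw [mul_inv_cancel₀ (hb0 t), map_one, one_mul]
  · rintro e he ⟨x, hx⟩
    obtain ⟨P, Q, hQ, rfl⟩ := IsFractionRing.div_surjective (A := PR p γ b) x
    have hQ0 : Q ≠ 0 := nonZeroDivisors.ne_zero hQ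
    have hjQ : j Q ≠ 0 := (map_ne_zero_iff _ hj).2 hQ0
    have h1 : j (iR p γ b (MvPolynomial.C e) * Nm p σ₀ Q) = j (Nm p σ₀ P) := by
      rw [map_mul, hNj, hNj]
      have : j P = j P / j Q * j Q := by rw [div_mul_cancel₀ _ hjQ]
      rw [this, Nm_mul]
      congr 1
      exact hx.symm
    have h2 := hj h1
    have heu : IsUnit (iR p γ b (MvPolynomial.C e)) := ((IsUnit.mk0 _ he).map MvPolynomial.C).map _
    obtain ⟨u, hu, h3⟩ := unit_norm hp.ne_zero hσ heu Q P hQ0 h2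
    exact plus_unit p τ γ b hb0 hirr hγ hb hτ he hu h3

end GenusAux

namespace GenusAux

open Polynomial

lemma lagrange_res {L : Type u} [Field L] {p : ℕ} (hp : p.Prime) (σ : L →+* L)
    (hσ : ∀ x, σ^[p] x = x) {ω A : L} (hω : IsPrimitiveRoot ω p) (hσω : σ ω = ω)
    (hA : σ A = ω * A) (hA0 : A ≠ 0) (z : L) :
    ∃ Y : (RingHom.eqLocusField σ (RingHom.id L))[X], z = aeval A Y := by
  have hω0 : ω ≠ 0 := hω.ne_zero hp.ne_zero
  have : NeZero p := ⟨hp.ne_zero⟩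
  have hpL : (p : L) ≠ 0 := (hω.neZero').out
  let r : ℕ → L := fun s => (p : L)⁻¹ * ∑ k ∈ Finset.range p, (ω⁻¹ ^ k) ^ s * σ^[k] z
  have hr : ∀ s, σ (r s) = ω ^ s * r s := by
    intro s
    have h1 : σ (r s) = (p : L)⁻¹ * ∑ k ∈ Finset.range p, (ω⁻¹ ^ k) ^ s * σ^[k+1] z := by
      simp only [r, map_mul, map_inv₀, map_natCast, map_sum, map_pow, hσω,
        Function.iterate_succ_apply']
    have h2 : ∑ k ∈ Finset.range p, (ω⁻¹ ^ k) ^ s * σ^[k+1] z =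
        ω ^ s * ∑ k ∈ Finset.range p, (ω⁻¹ ^ (k+1)) ^ s * σ^[k+1] z := by
      rw [Finset.mul_sum]
      refine Finset.sum_congr rfl (fun k _ => ?_)
      rw [pow_succ, mul_pow, inv_pow ω s]
      field_simp
    have h3 : ∑ k ∈ Finset.range p, (ω⁻¹ ^ (k+1)) ^ s * σ^[k+1] z =
        ∑ k ∈ Finset.range p, (ω⁻¹ ^ k) ^ s * σ^[k] z := by
      have h4 := Finset.sum_range_succ (fun k => (ω⁻¹ ^ k) ^ s * σ^[k] z) p
      rw [Finset.sum_range_succ'] at h4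
      rw [hσ, inv_pow ω p, hω.pow_eq_one] at h4
      simpa using h4
    rw [h1, h2, h3]
    simp only [r]
    ring
  have hfix : ∀ s, σ (r s * (A ^ s)⁻¹) = r s * (A ^ s)⁻¹ := by
    intro s
    rw [map_mul, map_inv₀, map_pow, hA, hr, mul_pow]
    field_simp
  refine ⟨∑ s ∈ Finset.range p, C ⟨r s * (A ^ s)⁻¹, hfix s⟩ * X ^ s, ?_⟩
  rw [map_sum]
  have h5 : ∀ s ∈ Finset.range p, aeval A (C (⟨r s * (A ^ s)⁻¹, hfix s⟩ : 
      RingHom.eqLocusField σ (RingHom.id L)) * X ^ s) = r s := by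
    intro s _
    rw [map_mul, aeval_C, map_pow, aeval_X]
    change r s * (A ^ s)⁻¹ * A ^ s = r s
    field_simp
  rw [Finset.sum_congr rfl h5]
  simp only [r]
  rw [← Finset.mul_sum, Finset.sum_comm]
  have h6 : ∀ k ∈ Finset.range p, ∑ s ∈ Finset.range p, (ω⁻¹ ^ k) ^ s * σ^[k] z =
      if k = 0 then p * z else 0 := by
    intro k hk
    split_ifs with h
    · subst h; simp
    · rw [← Finset.sum_mul]
      have h7 : ω⁻¹ ^ k ≠ 1 := hω.inv.pow_ne_one_of_pos_of_lt h (Finset.mem_range.1 hk)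
      have h8 := mul_geom_sum (ω⁻¹ ^ k) p
      rw [← pow_mul, mul_comm k p, pow_mul, hω.inv.pow_eq_one, one_pow, sub_self] at h8
      rcases mul_eq_zero.1 h8 with h9 | h9
      · exact absurd (sub_eq_zero.1 h9) h7
      · rw [h9, zero_mul]
  rw [Finset.sum_congr rfl h6, Finset.sum_ite_eq', if_pos (Finset.mem_range.2 hp.pos)]
  field_simp

lemma plus_step {F : Type u} [Field F] {p : ℕ} (hp : p.Prime) {ζ a e₀ : F}
    (hζ : IsPrimitiveRoot ζ p) (ha : a ≠ 0) (he₀ : ¬ IsN p ζ a e₀) :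
    ∃ (K : Type u) (_ : Field K) (g : F →+* K),
      (∀ e, IsN p (g ζ) (g a) (g e) → IsN p ζ a e) ∧
      ∀ b c, b ≠ 0 → Solved p (g ζ) (g a) (g b) (g c) := by
  have hirr := irr_of_not_isN hp hζ ha he₀
  have hfact : Fact (Irreducible (X ^ p - C a : F[X])) := ⟨hirr⟩
  have hM : IsField (Mx p a) := @Field.toIsField (Mx p a) AdjoinRoot.instField
  have hinjM := injMx (p := p) (a := a) hp.ne_zero
  let τ : Mx p a →+* Mx p a := (tau a hζ.pow_eq_one hp.ne_zero : Mx p a →+* Mx p a)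
  have hτit : ∀ s m, τ^[s] m = (tau a hζ.pow_eq_one hp.ne_zero ^ s) m := fun s m =>
    tau_iterate _ _ s m
  have hτp : ∀ m, τ^[p] m = m := by
    intro m
    rw [hτit, tau_pow_p]; rfl
  have hτF : ∀ x : F, τ (algebraMap F _ x) = algebraMap F _ x := fun x =>
    (tau a hζ.pow_eq_one hp.ne_zero).commutes x
  let T := {bc : F × F // bc.1 ≠ 0 ∧ ∀ m : Mx p a, m ^ p ≠ algebraMap F _ (bc.2 / a)}
  obtain ⟨L, _, f, σ, hσf, hσp, hsol, hcons⟩ := plus_abs hM hp τ (T := T)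
    (fun t => algebraMap F _ (t.1.2 / a)) (fun t => algebraMap F _ t.1.1) hτp
    (fun t => hτF _) (fun t => hτF _)
    (fun t => (map_ne_zero_iff _ hinjM).2 t.2.1) (fun t => t.2.2)
  let K := RingHom.eqLocusField σ (RingHom.id L)
  let f' : F →+* L := f.comp (algebraMap F (Mx p a))
  have hf' : ∀ x, σ (f' x) = f' x := fun x => by
    change σ (f _) = f _
    rw [hσf, hτF]
  let g : F →+* K := f'.codRestrict K hf'
  have hg : ∀ x, algebraMap K L (g x) = f' x := fun x => rfl
  let A : L := f (AdjoinRoot.root _)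
  have hAp : A ^ p = algebraMap K L (g a) := by
    rw [hg]
    change _ = f (algebraMap F (Mx p a) a)
    rw [← root_pow, map_pow]
  have hA0 : A ≠ 0 := by
    intro h
    rw [h, zero_pow hp.ne_zero, hg] at hAp
    exact ha (f'.injective (by rw [← hAp, map_zero]))
  have hσA : σ A = f' ζ * A := by
    change σ (f _) = f (algebraMap F (Mx p a) ζ) * f _
    rw [hσf, ← map_mul]
    congr 1
    exact tau_root _ _
  let σK : L →ₐ[K] L := { σ with commutes' := fun x => x.2 }
  have hσK : ∀ x, σK x = σ x := fun x => rfl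
  have hσkA : ∀ k, σ^[k] A = algebraMap K L (g ζ) ^ k * A := by
    intro k
    induction k with
    | zero => simp
    | succ k ih =>
      rw [Function.iterate_succ_apply', ih, map_mul, map_pow, hσA, hg, hf']
      ring
  have hσP : ∀ (P : K[X]) k, σ^[k] (aeval A P) = aeval (σ^[k] A) P := by
    intro P k
    induction k with
    | zero => rfl
    | succ k ih =>
      rw [Function.iterate_succ_apply', ih, Function.iterate_succ_apply', ← hσK, ← hσK,
        Polynomial.aeval_algHom_apply]
  have hNm : ∀ P : K[X], Nm p σ (aeval A P) = aeval A (nrm p (g ζ) P) := by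
    intro P
    rw [aeval_nrm, Nm]
    refine Finset.prod_congr rfl (fun k _ => ?_)
    rw [hσP, hσkA]
  have hconsg : ∀ e, IsN p (g ζ) (g a) (g e) → IsN p ζ a e := by
    intro e ⟨P, hP⟩
    by_cases he : e = 0
    · subst he
      simpa [zero_pow hp.ne_zero] using isN_pow (p := p) (ζ := ζ) (a := a) 0
    have h1 := aeval_eq_of_dvd hAp hP
    rw [← hNm, hg] at h1
    obtain ⟨m, hm⟩ := hcons (algebraMap F _ e) ((map_ne_zero_iff _ hinjM).2 he) ⟨_, h1⟩
    rw [isN_iff hζ.pow_eq_one hp.ne_zero]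
    refine ⟨m, ?_⟩
    rw [← hm, Nm]
    exact Finset.prod_congr rfl (fun k _ => (hτit k m).symm)
  refine ⟨K, inferInstance, g, hconsg, ?_⟩
  intro b c hb
  by_cases hbc : ∀ m : Mx p a, m ^ p ≠ algebraMap F _ (c / a)
  · right
    obtain ⟨w, z, hw, h⟩ := hsol ⟨(b, c), hb, hbc⟩
    obtain ⟨Y, rfl⟩ := lagrange_res hp σ hσp (ω := f' ζ) (hζ.map_of_injective f'.injective)
      (hf' ζ) hσA hA0 z
    refine ⟨⟨w, hw⟩, Y, ?_⟩
    have hirr' : Irreducible (X ^ p - C (g a)) := 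
      irr_of_not_isN hp (hζ.map_of_injective g.injective) ((map_ne_zero g).2 ha)
        (fun h => he₀ (hconsg _ h))
    have hmin : X ^ p - C (g a) = minpoly K A := 
      minpoly.eq_of_irreducible_of_monic hirr' (by simp [hAp]) (monic_X_pow_sub_C _ hp.ne_zero)
    rw [hmin]
    apply minpoly.dvd
    rw [hNm] at h
    have hfa : f' a ≠ 0 := (map_ne_zero f').2 ha
    have h2 : w ^ p - f' (c / a) = f' b * aeval A (nrm p (g ζ) Y) := h
    rw [map_div₀] at h2
    simp only [map_sub, map_mul, aeval_C, hg, map_pow]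
    rw [← h2]
    change f' a * (w ^ p - (w ^ p - f' c / f' a)) - f' c = 0
    field_simp
    ring
  · push Not at hbc
    obtain ⟨m, hm⟩ := hbc
    refine Solved.map g (Or.inl ?_)
    obtain ⟨P, rfl⟩ := AdjoinRoot.mk_surjective m
    refine ⟨X * P, ?_⟩
    rw [← AdjoinRoot.mk_eq_zero, map_sub, map_pow, map_mul, mul_pow, hm, AdjoinRoot.mk_X, root_pow,
      ← map_mul, mul_div_cancel₀ _ ha, sub_eq_zero]
    rfl

end GenusAux

namespace GenusAux

open Polynomial

attribute [local instance] Algebra.TensorProduct.rightAlgebra in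
lemma norm_abs {E E' R : Type u} [Field E] [Field E'] [Algebra E E'] [FiniteDimensional E E']
    [CommRing R] [Algebra E R] {p : ℕ} {ζ a e : E} (A : R) (hA : A ^ p = algebraMap E R a)
    (τ : R ≃ₐ[E] R) (hτ : ∀ k, (τ ^ k) A = algebraMap E R ζ ^ k * A)
    (h : IsN p (algebraMap E E' ζ) (algebraMap E E' a) (algebraMap E E' e)) :
    ∃ x : R, ∏ k ∈ Finset.range p, (τ ^ k) x = algebraMap E R (e ^ Module.finrank E E') := by
  obtain ⟨P, hP⟩ := h
  let S := TensorProduct E R E'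
  let iL : R →ₐ[R] S := Algebra.TensorProduct.includeLeft
  have hEE : ∀ x : E, algebraMap E' S (algebraMap E E' x) = algebraMap R S (algebraMap E R x) := by
    intro x
    change (1 : R) ⊗ₜ[E] (algebraMap E E' x) = (algebraMap E R x) ⊗ₜ[E] (1 : E')
    rw [Algebra.algebraMap_eq_smul_one, Algebra.algebraMap_eq_smul_one, TensorProduct.smul_tmul]
  have hA' : (algebraMap R S A) ^ p = algebraMap E' S (algebraMap E E' a) := by
    rw [hEE, ← map_pow, hA]
  have h1 := aeval_eq_of_dvd hA' hP
  rw [aeval_nrm] at h1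
  let T : ∀ _ : ℕ, S ≃ₐ[E] S := fun k => Algebra.TensorProduct.congr (τ ^ k) AlgEquiv.refl
  have hTl : ∀ k (r : R), T k (algebraMap R S r) = algebraMap R S ((τ ^ k) r) := by
    intro k r
    change T k (r ⊗ₜ[E] (1 : E')) = ((τ ^ k) r) ⊗ₜ[E] (1 : E')
    rfl
  have hTr : ∀ k (r : E'), T k (algebraMap E' S r) = algebraMap E' S r := by
    intro k r
    change T k ((1 : R) ⊗ₜ[E] r) = (1 : R) ⊗ₜ[E] r
    change ((τ ^ k) 1) ⊗ₜ[E] r = (1 : R) ⊗ₜ[E] r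
    rw [map_one]
  let T' : ∀ _ : ℕ, S →ₐ[E'] S := fun k => { (T k : S →+* S) with commutes' := hTr k }
  have hT' : ∀ k s, T' k s = T k s := fun k s => rfl
  have h2 : ∀ k, aeval (algebraMap E' S (algebraMap E E' ζ) ^ k * algebraMap R S A) P = 
      T k (aeval (algebraMap R S A) P) := by
    intro k
    rw [← hT', ← Polynomial.aeval_algHom_apply, hT', hTl, hτ, map_mul, map_pow, hEE]
  have hnorm : ∀ k (s : S), Algebra.norm R (T k s) = (τ ^ k) (Algebra.norm R s) := by
    intro k s
    have := Algebra.norm_eq_of_equiv_equiv (A₁ := R) (A₂ := R) (B₁ := S) (B₂ := S)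
      ((τ ^ k : R ≃ₐ[E] R) : R ≃+* R) (T k : S ≃+* S) (by
        ext r
        exact (hTl k r).symm) s
    rw [this]
    exact (((τ ^ k : R ≃ₐ[E] R) : R ≃+* R).apply_symm_apply _).symm
  have h3 := congrArg (Algebra.norm R) h1
  rw [map_prod] at h3
  simp only [h2, hnorm] at h3
  refine ⟨_, h3.trans ?_⟩
  rw [hEE, Algebra.norm_algebraMap_of_basis 
    (Module.Basis.baseChange R (Module.finBasis E E')), Fintype.card_fin, map_pow]

lemma norm_descent {E E' : Type u} [Field E] [Field E'] [Algebra E E'] [FiniteDimensional E E']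
    {p : ℕ} (hp : p.Prime) {ζ a e : E} (hζ : ζ ^ p = 1) 
    (hd : (Module.finrank E E').Coprime p)
    (h : IsN p (algebraMap E E' ζ) (algebraMap E E' a) (algebraMap E E' e)) : IsN p ζ a e := by
  apply isN_of_pow_coprime hp hd
  rw [isN_iff hζ hp.ne_zero]
  exact norm_abs (AdjoinRoot.root _) root_pow (tau a hζ hp.ne_zero) (tau_pow_root hζ hp.ne_zero) h

lemma isN_lifts {E Om : Type*} [Field E] [Field Om] (f : E →+* Om) {p : ℕ} (hp : p.Prime) {ζ a e : E} :
    IsN p ζ a e ↔ ∃ P ∈ lifts f, X ^ p - C (f a) ∣ nrm p (f ζ) P - C (f e) := by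
  have key : ∀ P : E[X], X ^ p - C a ∣ nrm p ζ P - C e ↔ 
      X ^ p - C (f a) ∣ nrm p (f ζ) (P.map f) - C (f e) := by
    intro P
    rw [← Polynomial.map_dvd_map f f.injective (monic_X_pow_sub_C a hp.ne_zero)]
    simp [nrm_map]
  constructor
  · rintro ⟨P, hP⟩
    exact ⟨P.map f, (mem_lifts _).2 ⟨P, rfl⟩, (key P).1 hP⟩
  · rintro ⟨_, hP, h⟩
    obtain ⟨P, rfl⟩ := (mem_lifts _).1 hP
    exact ⟨P, (key P).2 h⟩

lemma sharp_step {F : Type u} [Field F] {p : ℕ} (hp : p.Prime) {ζ a : F} (hζ : ζ ^ p = 1) :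
    ∃ (K : Type u) (_ : Field K) (g : F →+* K),
      (∀ e, IsN p (g ζ) (g a) (g e) → IsN p ζ a e) ∧
      ∀ h : K[X], Irreducible h → h.natDegree.Coprime p → h.natDegree = 1 := by
  let Om := AlgebraicClosure F
  let S : Set (IntermediateField F Om) := {E | ∀ e, IsN p (algebraMap F E ζ) (algebraMap F E a)
    (algebraMap F E e) → IsN p ζ a e}
  have hS : ∀ E : IntermediateField F Om, E ∈ S ↔ ∀ e, ∀ P : Om[X], ↑P.coeffs ⊆ (E : Set Om) → 
      X ^ p - C (algebraMap F Om a) ∣ nrm p (algebraMap F Om ζ) P - C (algebraMap F Om e) →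
      IsN p ζ a e := by
    intro E
    have hr : Set.range (algebraMap E Om) = (E : Set Om) := Subtype.range_coe
    constructor
    · intro h e P hP hdvd
      apply h
      rw [isN_lifts (algebraMap E Om) hp]
      exact ⟨P, (lifts_iff_coeffs_subset_range _).2 (by rw [hr]; exact hP), hdvd⟩
    · intro h e hN
      rw [isN_lifts (algebraMap E Om) hp] at hN
      obtain ⟨P, hP, hdvd⟩ := hN
      rw [lifts_iff_coeffs_subset_range, hr] at hP
      exact h e P hP hdvd
  obtain ⟨E, -, hE⟩ := zorn_le_nonempty₀ S (by
    intro c hc hch y hy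
    have hne : Nonempty c := ⟨⟨y, hy⟩⟩
    refine ⟨sSup c, ?_, fun z hz => le_sSup hz⟩
    rw [hS]
    intro e P hP hdvd
    rw [sSup_eq_iSup', IntermediateField.coe_iSup_of_directed hch.directed] at hP
    obtain ⟨i, hi⟩ := Directed.exists_mem_subset_of_finset_subset_biUnion hch.directed hP
    exact (hS _).1 (hc i.2) e P hi hdvd) ⊥ (by
    intro e h
    have := h.map ((IntermediateField.botEquiv F Om : (⊥ : IntermediateField F Om) ≃ₐ[F] F) : (⊥ : IntermediateField F Om) →+* F)
    simpa using this)
  refine ⟨E, inferInstance, algebraMap F E, hE.prop, ?_⟩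
  intro h hirr hcop
  obtain ⟨y, hy⟩ := IsAlgClosed.exists_aeval_eq_zero Om h (ne_of_gt hirr.degree_pos)
  have hint : IsIntegral E y := Algebra.IsIntegral.isIntegral y
  have hdeg : h.natDegree = (minpoly E y).natDegree := by
    rw [← minpoly.eq_of_irreducible hirr hy, natDegree_mul_C]
    exact inv_ne_zero (leadingCoeff_ne_zero.2 hirr.ne_zero)
  have hfin := IntermediateField.adjoin.finrank hint
  have : FiniteDimensional E (IntermediateField.adjoin E {y}) := 
    IntermediateField.adjoin.finiteDimensional hint
  have hE' : (IntermediateField.adjoin E {y}).restrictScalars F ∈ S := by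
    intro e he
    refine hE.prop e (norm_descent (E' := IntermediateField.adjoin E {y}) hp ?_ ?_ he)
    · rw [← map_pow, hζ, map_one]
    · rw [hfin, ← hdeg]; exact hcop
  have hle : E ≤ (IntermediateField.adjoin E {y}).restrictScalars F := by
    intro x hx
    exact (IntermediateField.adjoin E {y}).algebraMap_mem ⟨x, hx⟩
  have h4 := hE.le_of_ge hE' hle
  have hyE : y ∈ E := h4 (IntermediateField.mem_adjoin_simple_self E y)
  rw [hdeg, minpoly.natDegree_eq_one_iff]
  exact ⟨⟨y, hyE⟩, rfl⟩

end GenusAux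

namespace GenusAux

open Polynomial

/-- The data preserved through the construction. -/
structure Datum (p : ℕ) : Type (u + 1) where
  F : Type u
  [fld : Field F]
  ζ : F
  a : F
  e : F
  hζ : IsPrimitiveRoot ζ p
  ha : a ≠ 0
  he : ¬ IsN p ζ a e

attribute [instance] Datum.fld

lemma irr_of_map {K L : Type*} [Field K] [Field L] (f : K →+* L) {h : K[X]}
    (hh : Irreducible (h.map f)) : Irreducible h := by
  refine ⟨fun hu => hh.not_isUnit (hu.map (mapRingHom f)), fun a b hab => ?_⟩
  have := hh.isUnit_or_isUnit (a := a.map f) (b := b.map f) (by rw [hab, Polynomial.map_mul])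
  simpa only [isUnit_iff_degree_eq_zero, degree_map] using this

lemma datum_step {p : ℕ} (hp : p.Prime) (D : Datum.{u} p) :
    ∃ (D' : Datum.{u} p) (g : D.F →+* D'.F), g D.ζ = D'.ζ ∧ g D.a = D'.a ∧
      (∀ e, IsN p D'.ζ D'.a (g e) → IsN p D.ζ D.a e) ∧
      (∀ h : D.F[X], Irreducible (h.map g) → h.natDegree.Coprime p → h.natDegree = 1) ∧
      (∀ b c, b ≠ 0 → Solved p D'.ζ D'.a (g b) (g c)) := by
  obtain ⟨E, _, g₁, hc₁, hE⟩ := sharp_step hp (a := D.a) D.hζ.pow_eq_one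
  obtain ⟨K, _, g₂, hc₂, hK⟩ := plus_step hp (D.hζ.map_of_injective g₁.injective)
    ((map_ne_zero g₁).2 D.ha) (fun h => D.he (hc₁ _ h))
  refine ⟨⟨K, g₂ (g₁ D.ζ), g₂ (g₁ D.a), g₂ (g₁ D.e),
    (D.hζ.map_of_injective g₁.injective).map_of_injective g₂.injective,
    (map_ne_zero g₂).2 ((map_ne_zero g₁).2 D.ha), fun h => D.he (hc₁ _ (hc₂ _ h))⟩, g₂.comp g₁,
    rfl, rfl, fun e h => hc₁ _ (hc₂ _ h), ?_, ?_⟩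
  · intro h hirr hcop
    rw [← Polynomial.map_map] at hirr
    have := hE _ (irr_of_map g₂ hirr) (by rwa [natDegree_map])
    rwa [natDegree_map] at this
  · intro b c hb
    exact hK (g₁ b) (g₁ c) ((map_ne_zero g₁).2 hb)

lemma nat_limit (G : ℕ → Type u) [∀ n, Field (G n)] (s : ∀ n, G n →+* G (n + 1)) :
    ∃ (K : Type u) (_ : Field K) (ι : ∀ n, G n →+* K), (∀ n x, ι (n + 1) (s n x) = ι n x) ∧
      ∀ q : K[X], ∃ n P, Polynomial.map (ι n) P = q := by
  let f : ∀ i j, i ≤ j → G i →+* G j := fun i j h =>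
    Nat.leRecOn (C := fun k => G i →+* G k) h (fun {k} g => (s k).comp g) (RingHom.id _)
  have hself : ∀ i (h : i ≤ i), f i i h = RingHom.id _ := fun i h => Nat.leRecOn_self _
  have hsucc : ∀ i j (h : i ≤ j) (h' : i ≤ j + 1), f i (j + 1) h' = (s j).comp (f i j h) :=
    fun i j h h' => Nat.leRecOn_succ h _
  have hds : DirectedSystem G (fun i j h => f i j h) := by
    constructor
    · intro i x
      rw [hself]; rfl
    · intro k j i hij hjk x
      induction k, hjk using Nat.le_induction with
      | base => rw [hself]; rfl
      | succ k hjk ih =>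
        rw [hsucc j k hjk, hsucc i k (hij.trans hjk), RingHom.comp_apply, RingHom.comp_apply, ih]
  letI := Field.DirectLimit.field G f
  refine ⟨Ring.DirectLimit G (fun i j h => f i j h), this, fun n => Ring.DirectLimit.of G _ n,
    ?_, fun q => Ring.DirectLimit.Polynomial.exists_of q⟩
  intro n x
  have h := Ring.DirectLimit.of_f (G := G) (f := fun i j h => f i j h) (Nat.le_succ n) x
  rw [← h, hsucc n n le_rfl, hself]
  rfl

theorem limit_thm {F : Type u} [Field F] {p : ℕ} (hp : p.Prime) {ζ a e₀ : F}
    (hζ : IsPrimitiveRoot ζ p) (ha : a ≠ 0) (he₀ : ¬ IsN p ζ a e₀) :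
    ∃ (K : Type u) (_ : Field K) (g : F →+* K),
      (∀ e, IsN p (g ζ) (g a) (g e) → IsN p ζ a e) ∧
      (∀ h : K[X], Irreducible h → h.natDegree.Coprime p → h.natDegree = 1) ∧
      (∀ b c, b ≠ 0 → Solved p (g ζ) (g a) b c) := by
  choose nxt g hgζ hga hcons hirr hsol using datum_step.{u} hp
  let D : ℕ → Datum.{u} p := fun n => Nat.rec (motive := fun _ => Datum.{u} p) ⟨F, ζ, a, e₀, hζ, ha, he₀⟩ (fun _ d => nxt d) n
  let s : ∀ n, (D n).F →+* (D (n + 1)).F := fun n => g (D n)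
  obtain ⟨K, _, ι, hι, hpoly⟩ := nat_limit (fun n => (D n).F) s
  let j : ∀ n, F →+* (D n).F := fun n => Nat.rec (motive := fun n => F →+* (D n).F) (RingHom.id F) (fun n f => (s n).comp f) n
  have hjs : ∀ n x, j (n + 1) x = s n (j n x) := fun n x => rfl
  have hj : ∀ n x, ι n (j n x) = ι 0 x := by
    intro n x
    induction n with
    | zero => rfl
    | succ n ih => rw [hjs, hι, ih]
  have hjζ : ∀ n, j n ζ = (D n).ζ := by
    intro n
    induction n with
    | zero => rfl
    | succ n ih => rw [hjs, ih]; exact hgζ _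
  have hja : ∀ n, j n a = (D n).a := by
    intro n
    induction n with
    | zero => rfl
    | succ n ih => rw [hjs, ih]; exact hga _
  have hjc : ∀ n e, IsN p (D n).ζ (D n).a (j n e) → IsN p ζ a e := by
    intro n e h
    induction n with
    | zero => exact h
    | succ n ih => exact ih (hcons (D n) (j n e) h)
  refine ⟨K, inferInstance, ι 0, ?_, ?_, ?_⟩
  · rintro e ⟨P, hP⟩
    obtain ⟨n, Q, rfl⟩ := hpoly P
    apply hjc n
    rw [isN_lifts (ι n) hp, ← hjζ, ← hja, hj, hj, hj]
    exact ⟨_, (mem_lifts _).2 ⟨Q, rfl⟩, hP⟩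
  · intro h hh hcop
    obtain ⟨n, Q, rfl⟩ := hpoly h
    rw [natDegree_map] at hcop ⊢
    refine hirr (D n) Q ?_ hcop
    have h1 : ι n = (ι (n + 1)).comp (s n) := by
      ext x; exact (hι n x).symm
    rw [h1, ← Polynomial.map_map] at hh
    exact irr_of_map _ hh
  · intro b c hb
    obtain ⟨n, Q, hQ⟩ := hpoly (C b + C c * X)
    have hb' : ι n (Q.coeff 0) = b := by
      have := congrArg (fun q => coeff q 0) hQ
      simpa using this
    have hc' : ι n (Q.coeff 1) = c := by
      have := congrArg (fun q => coeff q 1) hQ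
      simpa using this
    have h1 := (hsol (D n) (Q.coeff 0) (Q.coeff 1) (by
      intro h; rw [h, map_zero] at hb'; exact hb hb'.symm)).map (ι (n + 1))
    have h2 : ∀ x, ι (n + 1) (g (D n) x) = ι n x := hι n
    rw [h2, h2, hb', hc', ← hgζ, ← hga, h2, h2, ← hjζ, ← hja, hj, hj] at h1
    exact h1

end GenusAux

namespace GenusAux

open Polynomial

lemma Nm_aeval {L : Type u} [Field L] {p : ℕ} (σ : L →+* L) {A : L}
    {z : RingHom.eqLocusField σ (RingHom.id L)} (hA : σ A = (z : L) * A)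
    (P : (RingHom.eqLocusField σ (RingHom.id L))[X]) : 
    Nm p σ (aeval A P) = aeval A (nrm p z P) := by
  let K := RingHom.eqLocusField σ (RingHom.id L)
  let σK : L →ₐ[K] L := { σ with commutes' := fun x => x.2 }
  have hσK : ∀ x, σK x = σ x := fun x => rfl
  have hz : σ (z : L) = z := z.2
  have hσkA : ∀ k, σ^[k] A = algebraMap K L z ^ k * A := by
    intro k
    induction k with
    | zero => simp
    | succ k ih =>
      rw [Function.iterate_succ_apply', ih, map_mul, map_pow, hA]
      change (σ (z : L)) ^ k * _ = (z : L) ^ (k + 1) * A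
      rw [hz]
      ring
  have hσP : ∀ (P : K[X]) k, σ^[k] (aeval A P) = aeval (σ^[k] A) P := by
    intro P k
    induction k with
    | zero => rfl
    | succ k ih =>
      rw [Function.iterate_succ_apply', ih, Function.iterate_succ_apply', ← hσK, ← hσK,
        Polynomial.aeval_algHom_apply]
  rw [aeval_nrm, Nm]
  refine Finset.prod_congr rfl (fun k _ => ?_)
  rw [hσP, hσkA]

lemma base_abs {F : Type u} [Field F] {p : ℕ} (hp : p.Prime) {ζ : F} (hζ : IsPrimitiveRoot ζ p) :
    ∃ (K : Type u) (_ : Field K) (g : F →+* K) (a : K), a ≠ 0 ∧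
      ∀ e, e ≠ 0 → IsN p (g ζ) a (g e) → ∃ c, c ^ p = e := by
  let σ₀ : F[X] →+* F[X] := (compRingHom (C ζ * X))
  have hσ₀C : ∀ x, σ₀ (C x) = C x := fun x => by simp [σ₀]
  have hσ₀X : σ₀ X = C ζ * X := by simp [σ₀]
  have hσ₀k : ∀ k, σ₀^[k] X = C (ζ ^ k) * X := by
    intro k
    induction k with
    | zero => simp
    | succ k ih =>
      rw [Function.iterate_succ_apply', ih, map_mul, hσ₀C, hσ₀X, pow_succ, C_mul, mul_assoc]
  have hσ₀p : ∀ x, σ₀^[p] x = x := by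
    intro x
    have h : σ₀ ^ p = RingHom.id _ := by
      apply Polynomial.ringHom_ext
      · intro r
        rw [RingHom.coe_pow]
        exact Function.iterate_fixed (hσ₀C r) p
      · rw [RingHom.coe_pow, hσ₀k, hζ.pow_eq_one]; simp
    have := congrArg (fun f : F[X] →+* F[X] => f x) h
    simpa only [RingHom.coe_pow, RingHom.id_apply] using this
  have hinj := sigma_inj hp.ne_zero hσ₀p
  let L := FractionRing F[X]
  let σ : L →+* L := IsFractionRing.map hinj
  let j : F[X] →+* L := algebraMap _ _
  have hj : Function.Injective j := IsFractionRing.injective _ _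
  have hσj : ∀ x, σ (j x) = j (σ₀ x) := fun x => IsLocalization.map_eq _ _
  have hNj : ∀ x, j (Nm p σ₀ x) = Nm p σ (j x) := fun x => Nm_map j (fun x => (hσj x).symm) x
  let K := RingHom.eqLocusField σ (RingHom.id L)
  let g : F →+* K := (j.comp C).codRestrict K (fun x => by
    change σ (j (C x)) = j (C x)
    rw [hσj, hσ₀C])
  let a : K := ⟨j X ^ p, by
    change σ (j X ^ p) = j X ^ p
    rw [map_pow, hσj, hσ₀X, ← map_pow, mul_pow, ← C_pow, hζ.pow_eq_one, C_1, one_mul, map_pow]⟩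
  have hA : σ (j X) = ((g ζ : K) : L) * j X := by
    change _ = j (C ζ) * j X
    rw [hσj, hσ₀X, map_mul]
  refine ⟨K, inferInstance, g, a, ?_, ?_⟩
  · intro h
    have h1 : j X ^ p = 0 := congrArg (fun x : K => (x : L)) h
    exact X_ne_zero (hj ((eq_zero_of_pow_eq_zero h1).trans (map_zero j).symm))
  · rintro e he ⟨P, hP⟩
    have h1 := aeval_eq_of_dvd (i := j X) (a := a) rfl hP
    rw [← Nm_aeval σ hA] at h1
    obtain ⟨S, Q, hQ, hx⟩ := IsFractionRing.div_surjective (A := F[X]) (aeval (j X) P)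
    have hQ0 : Q ≠ 0 := nonZeroDivisors.ne_zero hQ
    have hjQ : j Q ≠ 0 := (map_ne_zero_iff _ hj).2 hQ0
    have h2 : j (C e * Nm p σ₀ Q) = j (Nm p σ₀ S) := by
      rw [map_mul, hNj, hNj]
      have : j S = j S / j Q * j Q := by rw [div_mul_cancel₀ _ hjQ]
      rw [this, Nm_mul]
      congr 1
      change j (C e) = Nm p σ (algebraMap F[X] L S / algebraMap F[X] L Q)
      rw [hx, h1]
      rfl
    obtain ⟨u, hu, h3⟩ := unit_norm hp.ne_zero hσ₀p (isUnit_C.2 (IsUnit.mk0 e he)) Q S hQ0 (hj h2)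
    obtain ⟨c, -, rfl⟩ := Polynomial.isUnit_iff.1 hu
    refine ⟨c, C_injective ?_⟩
    rw [h3, Nm_fix (hσ₀C c), C_pow]

lemma ratio_not_pow {k : Type u} [Field k] {p : ℕ} (hp : p.Prime) {x : k} {g h : k[X]} (hg : g ≠ 0)
    (hh : h ≠ 0) (hgx : rootMultiplicity x g = 1) (hhx : rootMultiplicity x h = 0) 
    (c : FractionRing k[X]) : c ^ p ≠ algebraMap _ _ g / algebraMap _ _ h := by
  classical
  intro hc
  let j : k[X] →+* FractionRing k[X] := algebraMap _ _
  have hj : Function.Injective j := IsFractionRing.injective _ _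
  obtain ⟨S, Q, hQ, rfl⟩ := IsFractionRing.div_surjective (A := k[X]) c
  have hQ0 : Q ≠ 0 := nonZeroDivisors.ne_zero hQ
  have hjQ : j Q ≠ 0 := (map_ne_zero_iff _ hj).2 hQ0
  have hjh : j h ≠ 0 := (map_ne_zero_iff _ hj).2 hh
  have h1 : S ^ p * h = g * Q ^ p := by
    apply hj
    change (j S / j Q) ^ p = j g / j h at hc
    rw [div_pow, div_eq_div_iff (pow_ne_zero _ hjQ) hjh] at hc
    simpa only [map_mul, map_pow] using hc
  have hS0 : S ≠ 0 := by
    rintro rfl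
    rw [zero_pow hp.ne_zero, zero_mul] at h1
    exact mul_ne_zero hg (pow_ne_zero _ hQ0) h1.symm
  have h2 := congrArg (rootMultiplicity x) h1
  rw [rootMultiplicity_mul (mul_ne_zero (pow_ne_zero _ hS0) hh), 
    rootMultiplicity_mul (mul_ne_zero hg (pow_ne_zero _ hQ0)), hgx, hhx,
    ← count_roots, ← count_roots, roots_pow, roots_pow, Multiset.count_nsmul,
    Multiset.count_nsmul, add_zero] at h2
  have h3 : p ∣ 1 := (Nat.dvd_add_left (dvd_mul_right p _)).1 (h2 ▸ dvd_mul_right p _)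
  exact hp.one_lt.ne' (Nat.dvd_one.1 h3)

theorem base_thm {p : ℕ} (hp : p.Prime) : ∃ (K : Type u) (_ : Field K) (ζ a : K) (b : ℕ → K),
    CharZero K ∧ IsPrimitiveRoot ζ p ∧ a ≠ 0 ∧ (∀ n, b n ≠ 0) ∧ (∀ n, ¬ IsN p ζ a (b n)) ∧ 
    ∀ n m, n ≠ m → ¬ IsN p ζ a (b n / b m) := by
  have : CharZero (ULift.{u} ℚ) := 
    charZero_of_injective_ringHom (f := ((ULift.ringEquiv.symm : ℚ ≃+* ULift.{u} ℚ) : ℚ →+* ULift.{u} ℚ))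
      (ULift.ringEquiv.symm : ℚ ≃+* ULift.{u} ℚ).injective
  let k := AlgebraicClosure (ULift.{u} ℚ)
  have : CharZero k := charZero_of_injective_algebraMap (algebraMap (ULift.{u} ℚ) k).injective
  have : NeZero (p : k) := ⟨Nat.cast_ne_zero.2 hp.ne_zero⟩
  obtain ⟨ω, hω⟩ := IsAlgClosed.exists_root (cyclotomic p k) 
    (ne_of_gt (degree_cyclotomic_pos p k hp.pos))
  rw [isRoot_cyclotomic_iff] at hω
  let j : k[X] →+* FractionRing k[X] := algebraMap _ _
  have hj : Function.Injective j := IsFractionRing.injective _ _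
  obtain ⟨K, _, g, a, ha, hK⟩ := base_abs hp (ζ := j (C ω))
    ((hω.map_of_injective (C_injective)).map_of_injective hj)
  let β : ℕ → FractionRing k[X] := fun n => j (X - C (n : k))
  have hβ0 : ∀ n, β n ≠ 0 := fun n => (map_ne_zero_iff _ hj).2 (X_sub_C_ne_zero _)
  refine ⟨K, inferInstance, g (j (C ω)), a, fun n => g (β n),
    charZero_of_injective_ringHom (f := g.comp (j.comp C))
      (g.injective.comp (hj.comp C_injective)),
    ((hω.map_of_injective (C_injective)).map_of_injective hj).map_of_injective g.injective, ha,
    fun n => (map_ne_zero g).2 (hβ0 n), ?_, ?_⟩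
  · intro n h
    obtain ⟨c, hc⟩ := hK _ (hβ0 n) h
    refine ratio_not_pow hp (x := (n : k)) (g := X - C (n : k)) (h := 1) (X_sub_C_ne_zero _) 
      one_ne_zero rootMultiplicity_X_sub_C_self (by simp) c ?_
    rw [map_one, div_one]
    exact hc
  · intro n m hnm h
    rw [← map_div₀] at h
    obtain ⟨c, hc⟩ := hK _ (div_ne_zero (hβ0 n) (hβ0 m)) h
    refine ratio_not_pow hp (x := (n : k)) (g := X - C (n : k)) (h := X - C (m : k)) 
      (X_sub_C_ne_zero _) (X_sub_C_ne_zero _) rootMultiplicity_X_sub_C_self ?_ c hc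
    apply rootMultiplicity_eq_zero
    rw [root_X_sub_C]
    exact_mod_cast hnm.symm

end GenusAux

namespace GenusAux

open Polynomial

/-- A finite Galois extension of a field without prime-to-`p` extensions has `p`-group. -/
lemma card_gal_pow {K : Type*} [Field K] {p : ℕ} (hp : p.Prime)
    (hroot : ∀ h : K[X], Irreducible h → h.natDegree.Coprime p → h.natDegree = 1)
    (N : Type*) [Field N] [Algebra K N] [FiniteDimensional K N] [IsGalois K N] :
    ∃ n, Nat.card (N ≃ₐ[K] N) = p ^ n := by
  have : Fact p.Prime := ⟨hp⟩
  obtain ⟨P⟩ : Nonempty (Sylow p (N ≃ₐ[K] N)) := inferInstance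
  have hidx := P.not_dvd_index
  let E := IntermediateField.fixedField (P : Subgroup (N ≃ₐ[K] N))
  have hE : Module.finrank K E = (P : Subgroup (N ≃ₐ[K] N)).index := by
    rw [IntermediateField.finrank_eq_fixingSubgroup_index,
      IntermediateField.fixingSubgroup_fixedField]
  obtain ⟨θ, hθ⟩ := Field.exists_primitive_element K E
  have hθi : IsIntegral K θ := Algebra.IsIntegral.isIntegral θ
  have hdeg : (minpoly K θ).natDegree = Module.finrank K E :=
    (Field.primitive_element_iff_minpoly_natDegree_eq K θ).1 hθ
  have h1 := hroot (minpoly K θ) (minpoly.irreducible hθi) (by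
    rw [hdeg, hE]
    exact ((Nat.Prime.coprime_iff_not_dvd hp).2 hidx).symm)
  rw [hdeg, hE, Subgroup.index_eq_one] at h1
  obtain ⟨n, hn⟩ := IsPGroup.iff_card.1 P.isPGroup'
  refine ⟨n, ?_⟩
  rw [← hn, h1]
  exact (Subgroup.card_top).symm

lemma galois_of_degree {K : Type*} [Field K] [CharZero K] {p : ℕ} (hp : p.Prime)
    (hroot : ∀ h : K[X], Irreducible h → h.natDegree.Coprime p → h.natDegree = 1)
    (L : Type*) [Field L] [Algebra K L] (hL : Module.finrank K L = p) : IsGalois K L := by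
  have : FiniteDimensional K L := Module.finite_of_finrank_pos (hL ▸ hp.pos)
  let A := AlgebraicClosure L
  have : Normal K A := by
    have : IsAlgClosure K A := ⟨inferInstance, Algebra.IsAlgebraic.trans K L A⟩
    exact IsAlgClosure.normal K A
  let N := IntermediateField.normalClosure K L A
  have : IsGalois K N := { }
  have : FiniteDimensional K N := normalClosure.is_finiteDimensional K L A
  let f : L →ₐ[K] N := IsScalarTower.toAlgHom K L N
  obtain ⟨n, hn⟩ := card_gal_pow hp hroot N
  let L' := f.fieldRange
  let e : L ≃ₐ[K] L' := AlgEquiv.ofInjectiveField f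
  have hL' : Module.finrank K L' = p := by rw [← hL, e.toLinearEquiv.finrank_eq]
  have hidx : L'.fixingSubgroup.index = p := by
    rw [← IntermediateField.finrank_eq_fixingSubgroup_index, hL']
  have hn0 : n ≠ 0 := by
    rintro rfl
    have := L'.fixingSubgroup.index_dvd_card
    rw [hn, hidx, pow_zero, Nat.dvd_one] at this
    exact hp.one_lt.ne' this
  have : L'.fixingSubgroup.Normal := by
    apply Subgroup.normal_of_index_eq_minFac_card
    rw [hidx, hn, Nat.Prime.pow_minFac hp hn0]
  have hg := IsGalois.of_fixedField_normal_subgroup L'.fixingSubgroup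
  rw [IsGalois.fixedField_fixingSubgroup] at hg
  exact IsGalois.of_algEquiv e.symm

lemma embed {K : Type*} [Field K] [CharZero K] {p : ℕ} (hp : p.Prime) {ζ : K}
    (hζ : IsPrimitiveRoot ζ p)
    (hroot : ∀ h : K[X], Irreducible h → h.natDegree.Coprime p → h.natDegree = 1)
    (L : Type*) [Field L] [Algebra K L] (hL : Module.finrank K L = p)
    (D : Type*) [DivisionRing D] [Algebra K D]
    (hD : ∀ c : K, ∃ u : D, u ^ p = algebraMap K D c) : Nonempty (L →ₐ[K] D) := by
  have : FiniteDimensional K L := Module.finite_of_finrank_pos (hL ▸ hp.pos)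
  have := galois_of_degree hp hroot L hL
  have : Fact p.Prime := ⟨hp⟩
  have : IsCyclic (L ≃ₐ[K] L) := isCyclic_of_prime_card (p := p) (by
    rw [IsGalois.card_aut_eq_finrank, hL])
  obtain ⟨γ, ⟨c, hc⟩, htop⟩ := exists_root_adjoin_eq_top_of_isCyclic K L
    ⟨ζ, (mem_primitiveRoots (hL ▸ hp.pos)).2 (hL ▸ hζ)⟩
  have hirr := irreducible_X_pow_sub_C_of_root_adjoin_eq_top hc.symm htop
  rw [hL] at hirr hc
  obtain ⟨u, hu⟩ := hD c
  have hint : IsIntegral K γ := Algebra.IsIntegral.isIntegral γ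
  have hmin : minpoly K γ = X ^ p - C c :=
    (minpoly.eq_of_irreducible_of_monic hirr (by simp [hc]) (monic_X_pow_sub_C c hp.ne_zero)).symm
  let pb := IntermediateField.adjoin.powerBasis hint
  have hgen : minpoly K pb.gen = minpoly K γ := by
    rw [IntermediateField.adjoin.powerBasis_gen]
    exact IntermediateField.minpoly_gen K γ
  let φ : (IntermediateField.adjoin K {γ}) →ₐ[K] D := pb.lift u (by rw [hgen, hmin]; simp [hu])
  let e : L ≃ₐ[K] (IntermediateField.adjoin K {γ}) :=
    (IntermediateField.topEquiv.symm).trans (IntermediateField.equivOfEq htop.symm)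
  exact ⟨φ.comp e.toAlgHom⟩

lemma final_data {p : ℕ} (hp : p.Prime) : ∃ (K : Type u) (_ : Field K) (D : ℕ → Type u)
    (_ : ∀ n, DivisionRing (D n)) (_ : ∀ n, Algebra K (D n)),
    (∀ n, Algebra.IsCentral K (D n) ∧ FiniteDimensional K (D n) ∧
      Module.finrank K (D n) = p ^ 2) ∧
    (∀ n m, n ≠ m → IsEmpty (D n ≃ₐ[K] D m)) ∧
    ∀ n, ∀ (L : Type u) [Field L] [Algebra K L], Module.finrank K L = p →
      Nonempty (L →ₐ[K] D n) := by
  obtain ⟨F, _, ζ, a, b, _, hζ, ha, hb0, hb, hbb⟩ := base_thm.{u} hp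
  obtain ⟨K, _, g, hg, hroot, hsol⟩ := limit_thm hp hζ ha (hb 0)
  have : CharZero K := charZero_of_injective_ringHom g.injective
  have hζ' : IsPrimitiveRoot (g ζ) p := hζ.map_of_injective g.injective
  have ha' : g a ≠ 0 := (map_ne_zero g).2 ha
  have hb0' : ∀ n, g (b n) ≠ 0 := fun n => (map_ne_zero g).2 (hb0 n)
  have hb' : ∀ n, ¬ IsN p (g ζ) (g a) (g (b n)) := fun n h => hb n (hg _ h)
  have hbb' : ∀ n m, n ≠ m → ¬ IsN p (g ζ) (g a) (g (b n) / g (b m)) := fun n m hnm h => by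
    rw [← map_div₀] at h
    exact hbb n m hnm (hg _ h)
  choose D hdiv halg i j hcen hfin hrank hi hj hji hcz using
    fun n => exists_cyclic hp hζ' ha' (hb0' n) (hb' n)
  refine ⟨K, inferInstance, D, hdiv, halg, fun n => ⟨hcen n, hfin n, hrank n⟩, ?_, ?_⟩
  · intro n m hnm
    refine ⟨fun φ => hbb' n m hnm ?_⟩
    have := hfin m
    refine isN_of_iso hp hζ' ha' (hb0' n) (hb0' m) (irr_of_not_isN hp hζ' ha' (hb' 0))
      (hi m) (hj m) (hji m) (i' := φ (i n)) (j' := φ (j n)) ?_ ?_ ?_ (hcz m)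
    · rw [← map_pow, hi n, AlgEquiv.commutes]
    · rw [← map_pow, hj n, AlgEquiv.commutes]
    · rw [← map_mul, hji n, map_smul, map_mul]
  · intro n L _ _ hL
    exact embed hp hζ' hroot L hL (D n)
      fun c => exists_root_of_solved hp hζ' (hi n) (hj n) (hji n) (hsol _ c (hb0' n))

end GenusAux

/-- for any prime `p` there is a field `K` and a central division `K`-algebra
of degree `p` with infinite genus. -/
theorem exists_division_algebra_with_infinite_genus (p : ℕ) (hp : p.Prime) :
    Nonempty (InfiniteGenusWitness.{u} p) := by
  obtain ⟨K, _, D, _, _, h1, h2, h3⟩ := GenusAux.final_data.{u} hp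
  exact ⟨{ K := K, D := D 0, hD := h1 0, D' := D, hD' := h1, noniso := h2,
           sameMaxSubfields := fun n L _ _ hL => ⟨fun _ => h3 n L hL, fun _ => h3 0 L hL⟩ }⟩
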